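/- arXiv:2111.08780 — 4 statements merged into one kernel-verified Lean document; each statement's English description precedes it below -/
import Mathlib

section
/- Let π be a connection schedule of size N and period T, let a ∈ [N] and t ∈ ℤ, and let L, h be integers with 1 ≤ h ≤ L/3. If k is the number of nodes b ∈ [N] with b ≠ a such that the virtual topology contains a path from (a,t) to the timeline of b of latency at most L that uses at most h physical edges, then k ≤ 2·binom(L,h). -/
/-!
A physical edge leaving a vertex is unique, so a path from `(a, t)` is determined by the timeslots
at which it uses a physical edge, and padding it with virtual edges makes its latency exactly `L`
without changing the node it reaches. Hence at most `∑_{i ≤ h} binom(L, i)` nodes are reached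
(`ncard_reach_le`). For `3 * h ≤ L` consecutive binomial coefficients up to index `h` at least
double, so this sum is at most `2 * binom(L, h)` (`sum_choose_le`).
-/

open scoped ENNReal

/-- A connection schedule of size `N` and period `T`: a `T`-periodic sequence of
permutations of `[N]`, indexed by timeslots `t : ℤ`. -/
structure ConnSched (N T : ℕ) where
  Tpos : 0 < T
  perm : ℤ → Equiv.Perm (Fin N)
  periodic : ∀ t : ℤ, perm (t + T) = perm t

/-- A path in the virtual topology, encoded by its starting vertex together with the
list of its steps, where `true` denotes traversing the (unique) outgoing physical edge
and `false` denotes traversing the virtual edge. -/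
structure ORNPath (N : ℕ) where
  start : Fin N × ℤ
  steps : List Bool

namespace ORNPath

variable {N T : ℕ}

/-- One step in the virtual topology: from vertex `v`, either follow the physical edge
(`b = true`) to `(π_t v.1, v.2 + 1)`, or the virtual edge (`b = false`) to `(v.1, v.2+1)`. -/
def stepFn (S : ConnSched N T) (v : Fin N × ℤ) (b : Bool) : Fin N × ℤ :=
  (if b then S.perm v.2 v.1 else v.1, v.2 + 1)

/-- The final vertex of a path. -/
def dest (S : ConnSched N T) (P : ORNPath N) : Fin N × ℤ :=
  P.steps.foldl (stepFn S) P.start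

/-- The latency of a path: the total number of (virtual or physical) edges it contains. -/
def latency (P : ORNPath N) : ℕ := P.steps.length

/-- The number of physical edges of a path. -/
def hops (P : ORNPath N) : ℕ := P.steps.count true

/-- The vertex of a path after `k` steps. -/
def vertexAt (S : ConnSched N T) (P : ORNPath N) (k : ℕ) : Fin N × ℤ :=
  (P.steps.take k).foldl (stepFn S) P.start

/-- A physical edge of the virtual topology is identified by the pair
(sending node, timeslot); the receiving node is determined by the schedule.
`P.usesEdge S e` says that path `P` traverses the physical edge `e`. -/
def usesEdge (S : ConnSched N T) (P : ORNPath N) (e : Fin N × ℤ) : Prop :=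
  ∃ k : Fin P.steps.length, P.steps.get k = true ∧ P.vertexAt S k.val = e

/-- Transpose a path by `s` timeslots. -/
def shift (P : ORNPath N) (s : ℤ) : ORNPath N :=
  ⟨(P.start.1, P.start.2 + s), P.steps⟩

end ORNPath

/-- The amount of flow that `f` sends across the physical edge `e`. -/
noncomputable def edgeFlow {N T : ℕ} (S : ConnSched N T) (f : ORNPath N → ℝ≥0∞)
    (e : Fin N × ℤ) : ℝ≥0∞ :=
  ∑' P : {P : ORNPath N // P.usesEdge S e}, f P.val

/-- A flow is feasible if it places at most one unit of flow on every physical edge. -/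
def Feasible {N T : ℕ} (S : ConnSched N T) (f : ORNPath N → ℝ≥0∞) : Prop :=
  ∀ e : Fin N × ℤ, edgeFlow S f e ≤ 1

/-- An ORN design: a connection schedule together with an oblivious routing scheme.
`route a b t` is a unit flow supported on paths from `(a,t)` to the timeline of `b`,
periodic with period `T`. -/
structure ORNDesign (N T : ℕ) where
  sched : ConnSched N T
  route : Fin N → Fin N → ℤ → ORNPath N → ℝ≥0∞
  route_support : ∀ a b t P, route a b t P ≠ 0 →
    P.start = (a, t) ∧ (P.dest sched).1 = b
  route_unit : ∀ a b t, ∑' P : ORNPath N, route a b t P = 1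
  route_periodic : ∀ a b t P, route a b (t + T) (P.shift T) = route a b t P

/-- A demand function `D` (assigning to each timeslot an `N × N` matrix of nonnegative
reals) requests throughput `r` if all row and column sums of every `D t` are at most `r`. -/
def RequestsThroughput {N : ℕ} (D : ℤ → Fin N → Fin N → ℝ) (r : ℝ) : Prop :=
  (∀ t a b, 0 ≤ D t a b) ∧ (∀ t a, ∑ b, D t a b ≤ r) ∧ (∀ t b, ∑ a, D t a b ≤ r)

/-- The flow induced by routing the demand `D` with the routing scheme of `R`. -/
noncomputable def inducedFlow {N T : ℕ} (R : ORNDesign N T)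
    (D : ℤ → Fin N → Fin N → ℝ) (P : ORNPath N) : ℝ≥0∞ :=
  ∑' x : Fin N × Fin N × ℤ,
    ENNReal.ofReal (D x.2.2 x.1 x.2.1) * R.route x.1 x.2.1 x.2.2 P

/-- An ORN design guarantees throughput `r` if the induced flow is feasible for every
demand function requesting throughput at most `r`. -/
def GuaranteesThroughput {N T : ℕ} (R : ORNDesign N T) (r : ℝ) : Prop :=
  ∀ D : ℤ → Fin N → Fin N → ℝ, RequestsThroughput D r →
    Feasible R.sched (inducedFlow R D)

/-- The maximum latency of the ORN design `R` is at most `L`: every path carrying a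
positive amount of flow has latency at most `L`. -/
def MaxLatencyLE {N T : ℕ} (R : ORNDesign N T) (L : ℕ) : Prop :=
  ∀ a b t P, R.route a b t P ≠ 0 → P.latency ≤ L

/-- The nodes whose timeline is reached from the vertex `v` by a path of latency at most `n`
using at most `k` physical edges. -/
def reach {N T : ℕ} (S : ConnSched N T) (v : Fin N × ℤ) (n k : ℕ) : Set (Fin N) :=
  {b | ∃ steps : List Bool, steps.length ≤ n ∧ steps.count true ≤ k ∧
    (steps.foldl (ORNPath.stepFn S) v).1 = b}

/-- Pascal's rule, summed over the lower index. -/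
lemma sum_choose_succ (n k : ℕ) :
    ∑ i ∈ Finset.range (k + 2), (n + 1).choose i =
      ∑ i ∈ Finset.range (k + 2), n.choose i + ∑ i ∈ Finset.range (k + 1), n.choose i := by
  rw [Finset.sum_range_succ', Finset.sum_range_succ' (fun i => n.choose i) (k + 1)]
  simp only [Nat.choose_succ_succ, Finset.sum_add_distrib, Nat.choose_zero_right,
    Nat.succ_eq_add_one]
  omega

/-- The first step is either virtual or physical, which gives the recursion of
`sum_choose_succ`; the empty path is absorbed into the virtual case. -/
lemma ncard_reach_le {N T : ℕ} (S : ConnSched N T) (n k : ℕ) (v : Fin N × ℤ) :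
    (reach S v n k).ncard ≤ ∑ i ∈ Finset.range (k + 1), n.choose i := by
  induction n generalizing k v with
  | zero =>
    have hsub : reach S v 0 k ⊆ {v.1} := by
      rintro b ⟨steps, hl, -, rfl⟩
      obtain rfl : steps = [] := List.length_eq_zero_iff.mp (by omega)
      simp
    calc (reach S v 0 k).ncard ≤ ({v.1} : Set (Fin N)).ncard :=
          Set.ncard_le_ncard hsub (Set.toFinite _)
      _ = 1 := Set.ncard_singleton _
      _ ≤ _ := by rw [Finset.sum_range_succ']; simp
  | succ n ih =>
    cases k with
    | zero =>
      have hsub : reach S v (n + 1) 0 ⊆ reach S (ORNPath.stepFn S v false) n 0 := by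
        rintro b ⟨steps, hl, hc, rfl⟩
        match steps, hl, hc with
        | [], _, _ => exact ⟨[], by simp, by simp, by simp [ORNPath.stepFn]⟩
        | false :: l, hl, hc => exact ⟨l, by simpa using hl, by simpa using hc, rfl⟩
        | true :: l, hl, hc => simp at hc
      have h1 := Set.ncard_le_ncard hsub (Set.toFinite _)
      have h2 := ih 0 (ORNPath.stepFn S v false)
      simp only [zero_add, Finset.sum_range_one, Nat.choose_zero_right] at h2 ⊢
      omega
    | succ k =>
      have hsub : reach S v (n + 1) (k + 1) ⊆
          reach S (ORNPath.stepFn S v false) n (k + 1) ∪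
            reach S (ORNPath.stepFn S v true) n k := by
        rintro b ⟨steps, hl, hc, rfl⟩
        match steps, hl, hc with
        | [], _, _ => exact Or.inl ⟨[], by simp, by simp, by simp [ORNPath.stepFn]⟩
        | false :: l, hl, hc =>
          exact Or.inl ⟨l, by simpa using hl, by simpa using hc, rfl⟩
        | true :: l, hl, hc =>
          exact Or.inr ⟨l, by simpa using hl, by simpa using hc, rfl⟩
      rw [sum_choose_succ]
      calc _ ≤ _ := Set.ncard_le_ncard hsub (Set.toFinite _)
        _ ≤ _ := Set.ncard_union_le _ _
        _ ≤ _ := Nat.add_le_add (ih _ _) (ih _ _)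

lemma sum_choose_le (L h : ℕ) (hhL : 3 * h ≤ L) :
    ∑ i ∈ Finset.range (h + 1), L.choose i ≤ 2 * L.choose h := by
  induction h with
  | zero => simp
  | succ h ih =>
    rw [Finset.sum_range_succ]
    have h1 := ih (by omega)
    have h2 : 2 * L.choose h ≤ L.choose (h + 1) := by
      -- `binom(L, h+1) / binom(L, h) = (L - h) / (h + 1) ≥ 2` since `L ≥ 3 * (h + 1)`
      have h3 := Nat.choose_succ_right_eq L h
      have h4 : 2 * (h + 1) ≤ L - h := by omega
      have h5 := Nat.mul_le_mul_left (L.choose h) h4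
      refine Nat.le_of_mul_le_mul_right (c := h + 1) ?_ (Nat.succ_pos h)
      rw [h3]
      linarith
    omega

/-- **Counting Lemma.** For a connection schedule of size `N` and period
`T`, a node `a`, a starting timeslot `t`, and integers `1 ≤ h ≤ L/3`: the number of nodes
`b ≠ a` reachable from `(a,t)` by a path of latency at most `L` using at most `h`
physical edges is at most `2 * (L choose h)`. -/
theorem counting_lemma {N T : ℕ} (S : ConnSched N T) (a : Fin N) (t : ℤ)
    (L h : ℕ) (hh : 1 ≤ h) (hhL : 3 * h ≤ L) :
    {b : Fin N | b ≠ a ∧ ∃ steps : List Bool, steps.length ≤ L ∧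
        steps.count true ≤ h ∧
        (ORNPath.dest S ⟨(a, t), steps⟩).1 = b}.ncard ≤ 2 * L.choose h := by
  have hsub : {b : Fin N | b ≠ a ∧ ∃ steps : List Bool, steps.length ≤ L ∧
        steps.count true ≤ h ∧
        (ORNPath.dest S ⟨(a, t), steps⟩).1 = b} ⊆ reach S (a, t) L h := fun _ hb => hb.2
  exact (Set.ncard_le_ncard hsub (Set.toFinite _)).trans
    ((ncard_reach_le S L h (a, t)).trans (sum_choose_le L h hhL))
end

section
/- Let π be a connection schedule of size N and period T, let a ∈ [N] and t ∈ ℤ, and let L ≥ 0 and p ≥ 0 be integers. The number of nodes b ∈ [N] such that the virtual topology contains a path from (a,t) to the timeline of b of latency at most L that uses exactly p physical edges is at most binom(L,p). -/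
/-!
The bound follows from Pascal's rule, by induction on the latency budget `L`. Split a path from
`(a, t)` on its first edge: if that edge is virtual, the rest is a path from `(a, t + 1)` with the
same number of physical edges; if it is physical, the rest is a path from `(π_t a, t + 1)` with one
physical edge fewer. Hence the set of nodes reachable within `L + 1` edges and exactly `p + 1`
physical ones is covered by two such sets for latency `L`, of sizes at most `binom(L, p + 1)` and
`binom(L, p)`. Without physical edges, the path is empty or its first edge is virtual, so a single
set for latency `L` suffices.
-/

open scoped ENNReal

/-- For a connection schedule of size `N` and period `T`, a node `a`,
a starting timeslot `t`, and integers `L, p ≥ 0`: the number of nodes `b` reachable from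
`(a,t)` by a path of latency at most `L` using exactly `p` physical edges is at most
`binom(L,p)`. -/
theorem counting_exact_hops {N T : ℕ} (S : ConnSched N T) (a : Fin N) (t : ℤ)
    (L p : ℕ) :
    {b : Fin N | ∃ steps : List Bool, steps.length ≤ L ∧
        steps.count true = p ∧
        (ORNPath.dest S ⟨(a, t), steps⟩).1 = b}.ncard ≤ L.choose p := by
  induction L generalizing a t p with
  | zero =>
    cases p with
    | zero =>
      refine (Set.ncard_le_ncard (t := {a}) ?_).trans (by simp)
      rintro b ⟨steps, hlen, -, rfl⟩
      obtain rfl : steps = [] := List.eq_nil_of_length_eq_zero (by omega)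
      simp [ORNPath.dest]
    | succ p =>
      refine (Set.ncard_le_ncard (t := ∅) ?_).trans (by simp)
      rintro b ⟨steps, hlen, hcount, -⟩
      have := List.count_le_length (a := true) (l := steps)
      omega
  | succ L ih =>
    cases p with
    | zero =>
      refine (Set.ncard_le_ncard ?_).trans ((ih a (t + 1) 0).trans (by simp))
      rintro b ⟨steps, hlen, hcount, hb⟩
      match steps with
      | [] => exact ⟨[], by simp, rfl, hb⟩
      | false :: l => exact ⟨l, by simpa using hlen, by simpa using hcount, hb⟩
      | true :: l => simp at hcount
    | succ p =>
      rw [Nat.choose_succ_succ]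
      refine (Set.ncard_le_ncard ?_).trans ((Set.ncard_union_le _ _).trans
        (add_le_add (ih (S.perm t a) (t + 1) p) (ih a (t + 1) (p + 1))))
      rintro b ⟨steps, hlen, hcount, hb⟩
      match steps with
      | [] => simp at hcount
      | true :: l => exact Or.inl ⟨l, by simpa using hlen, by simpa using hcount, hb⟩
      | false :: l => exact Or.inr ⟨l, by simpa using hlen, by simpa using hcount, hb⟩
end

section
/- For every integer ℓ ≥ 1 and every integer n ≥ 2, setting N = n^ℓ and T = ℓ(n−1), there exists an ORN design on N nodes with period T that guarantees throughput 1/(2ℓ) and has maximum latency at most 2ℓ(n−1). -/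
/-!
The elementary basis scheme. Nodes are identified with the group `G = (ℤ/n)^ℓ`. Each timeslot of
a period is assigned a pair `(p, s)` of a coordinate `p` and a nonzero residue `s`, each of the
`ℓ(n-1)` pairs once, and its permutation is `x ↦ x + s·e_p`. A packet that has to travel by
`d ∈ G` takes the physical edge of slot `(p, s)` iff `d_p = s`; in any window of `T = ℓ(n-1)`
consecutive slots every pair occurs exactly once, so after `T` steps it has moved by exactly `d`
(`EBS.disp_period`).

Routing is in two such stages: from `a` to `a + d` with `d ∈ G` uniform, and then from `a + d` to
`b`; the latency is `2T`. For the load on the edge leaving `v` in the slot `τ` of the pair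
`(p, s)`, the decisions of a packet depend only on `d` and the start time, so its position after
`k` steps is a translate of its start node. Hence for each of the `T` values of `k` and each of the
`n^(ℓ-1)` values of `d` with `d_p = s` there is a single start time and start node that reach the
edge, and the first stage contributes at most `T · n^(ℓ-1) · r / n^ℓ`, where `r = 1/(2ℓ)` bounds
the row sums of the demand (`EBS.stage_load`). The second stage travels by `d₂ = b - a - d`, which
is uniform too, and starts at `b - d₂`, so the same count with column sums applies
(`EBS.edgeFlow_le`). The total is at most `2 · ℓ(n-1)/(2ℓn) ≤ 1`.
-/

open scoped ENNReal

namespace EBS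

/-! ### The schedule -/

/-- Nodes of the scheme: vectors of length `ℓ` over the cyclic group `Fin (m + 1) = ℤ/(m+1)`. -/
abbrev Node (ℓ m : ℕ) : Type := Fin ℓ → Fin (m + 1)

/-- The identification of the node labels `[(m+1)^ℓ]` with the group `(ℤ/(m+1))^ℓ`. -/
def lab (ℓ m : ℕ) : Fin ((m + 1) ^ ℓ) ≃ Node ℓ m := finFunctionFinEquiv.symm

/-- The pair (coordinate, nonzero residue) scheduled in timeslot `u`. Writing
`u mod ℓm = q m + s` with `s < m`, it is `(q, s + 1)`, so every pair occurs exactly once in a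
period. -/
def slot {ℓ m : ℕ} (h : 0 < ℓ * m) (u : ℤ) : Fin ℓ × Fin (m + 1) :=
  let x := finProdFinEquiv.symm (⟨(u % ((ℓ * m : ℕ) : ℤ)).toNat, by
    have h' : (0 : ℤ) < ((ℓ * m : ℕ) : ℤ) := by exact_mod_cast h
    have := Int.emod_lt_of_pos u h'
    have := Int.emod_nonneg u h'.ne'
    omega⟩ : Fin (ℓ * m))
  (x.1, x.2.succ)

/-- The group element that the permutation of timeslot `u` adds to a node. -/
def jump {ℓ m : ℕ} (h : 0 < ℓ * m) (u : ℤ) : Node ℓ m :=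
  Pi.single (slot h u).1 (slot h u).2

/-- Whether a packet that has to travel by `d ∈ (ℤ/(m+1))^ℓ` takes the physical edge in
timeslot `u`: it does so iff this sets the scheduled coordinate right. -/
def bit {ℓ m : ℕ} (h : 0 < ℓ * m) (d : Node ℓ m) (u : ℤ) : Bool :=
  decide (d (slot h u).1 = (slot h u).2)

/-- The displacement after `k` steps of a packet that starts at time `t` and has to travel
by `d`. -/
def disp {ℓ m : ℕ} (h : 0 < ℓ * m) (d : Node ℓ m) (t : ℤ) (k : ℕ) : Node ℓ m :=
  ∑ j ∈ Finset.range k, if bit h d (t + j) then jump h (t + j) else 0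

variable {ℓ m : ℕ} (h : 0 < ℓ * m)

lemma slot_periodic (u : ℤ) : slot h (u + (ℓ * m : ℕ)) = slot h u := by
  simp only [slot, Int.add_emod_right]

lemma jump_periodic (u : ℤ) : jump h (u + (ℓ * m : ℕ)) = jump h u := by
  simp only [jump, slot_periodic]

lemma bit_periodic (d : Node ℓ m) (u : ℤ) : bit h d (u + (ℓ * m : ℕ)) = bit h d u := by
  simp only [bit, slot_periodic]

lemma sum_window {G : Type*} [AddCommGroup G] (F : ℤ → G) (T : ℕ)
    (hF : ∀ u, F (u + T) = F u) (t : ℤ) :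
    ∑ j ∈ Finset.range T, F (t + j) = ∑ j ∈ Finset.range T, F j := by
  have step : ∀ t : ℤ, ∑ j ∈ Finset.range T, F (t + 1 + j) = ∑ j ∈ Finset.range T, F (t + j) := by
    intro t
    have h1 := Finset.sum_range_succ (fun j : ℕ => F (t + j)) T
    have h2 := Finset.sum_range_succ' (fun j : ℕ => F (t + j)) T
    rw [h1] at h2
    simp only [hF, Nat.cast_zero, add_zero] at h2
    rw [add_right_cancel h2]
    refine Finset.sum_congr rfl fun j _ => ?_
    congr 1
    push_cast
    ring
  induction t using Int.induction_on with
  | zero => simp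
  | succ i ih => rw [step, ih]
  | pred i ih => rw [← ih, ← step]; simp

/-- Every window of `ℓm` consecutive timeslots contains each pair (coordinate, nonzero residue)
exactly once, so it carries a packet exactly by the required displacement. -/
lemma disp_period (d : Node ℓ m) (t : ℤ) : disp h d t (ℓ * m) = d := by
  have hw := sum_window (fun u => if bit h d u then jump h u else 0) (ℓ * m)
    (fun u => by simp only [bit_periodic, jump_periodic]) t
  rw [disp, hw, Finset.sum_range (fun j : ℕ => if bit h d (j : ℤ) then jump h (j : ℤ) else 0),
    ← finProdFinEquiv.sum_comp, Fintype.sum_prod_type]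
  have hs : ∀ x : Fin ℓ × Fin m, slot h ((finProdFinEquiv x : ℕ) : ℤ) = (x.1, x.2.succ) := by
    intro x
    have hx : ((((finProdFinEquiv x : ℕ) : ℤ) % ((ℓ * m : ℕ) : ℤ)).toNat)
        = (finProdFinEquiv x : ℕ) := by
      rw [← Int.natCast_mod, Int.toNat_natCast, Nat.mod_eq_of_lt (finProdFinEquiv x).2]
    simp only [slot, hx, Fin.eta, Equiv.symm_apply_apply]
  simp only [bit, jump, hs, decide_eq_true_eq]
  have hp : ∀ p : Fin ℓ, (∑ s : Fin m, if d p = s.succ then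
      (Pi.single p s.succ : Node ℓ m) else 0) = Pi.single p (d p) := by
    intro p
    have := Fin.sum_univ_succ (fun z : Fin (m + 1) =>
      if d p = z then (Pi.single p z : Node ℓ m) else 0)
    simp only [Finset.sum_ite_eq, Finset.mem_univ, if_true, Pi.single_zero, ite_self,
      zero_add] at this
    exact this.symm
  simp only [hp]
  exact Finset.univ_sum_single d

/-- The connection schedule: timeslot `u` adds `jump u`. -/
def sched : ConnSched ((m + 1) ^ ℓ) (ℓ * m) where
  Tpos := h
  perm u := ((lab ℓ m).trans (Equiv.addRight (jump h u))).trans (lab ℓ m).symm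
  periodic u := by rw [jump_periodic]

/-! ### The paths -/

/-- The steps of the path that first travels by `d₁` during one period and then by `d₂` during
the following period. -/
def bits (d₁ d₂ : Node ℓ m) (t : ℤ) (j : ℕ) : Bool :=
  if j < ℓ * m then bit h d₁ (t + j) else bit h d₂ (t + j)

/-- The two-stage path from `(a, t)` to `b` through the intermediate node `a + d`. -/
def path (a b : Fin ((m + 1) ^ ℓ)) (t : ℤ) (d : Node ℓ m) : ORNPath ((m + 1) ^ ℓ) :=
  ⟨(a, t), (List.range (2 * (ℓ * m))).map (bits h d (lab ℓ m b - lab ℓ m a - d) t)⟩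

lemma foldl_range (a : Fin ((m + 1) ^ ℓ)) (t : ℤ) (B : ℕ → Bool) (k : ℕ) :
    ((List.range k).map B).foldl (ORNPath.stepFn (sched h)) (a, t) =
      ((lab ℓ m).symm (lab ℓ m a +
        ∑ j ∈ Finset.range k, if B j then jump h (t + j) else 0), t + k) := by
  induction k with
  | zero => simp
  | succ k ih =>
    rw [List.range_succ, List.map_append, List.foldl_append, ih, Finset.sum_range_succ]
    cases hB : B k
    · simp [ORNPath.stepFn, hB, add_assoc]
    · simp [ORNPath.stepFn, hB, sched, add_assoc]

lemma sum_bits_first (d₁ d₂ : Node ℓ m) (t : ℤ) {k : ℕ} (hk : k ≤ ℓ * m) :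
    (∑ j ∈ Finset.range k, if bits h d₁ d₂ t j then jump h (t + j) else 0) = disp h d₁ t k := by
  refine Finset.sum_congr rfl fun j hj => ?_
  have : j < ℓ * m := (Finset.mem_range.1 hj).trans_le hk
  simp only [bits, this, if_true]

lemma sum_bits_second (d₁ d₂ : Node ℓ m) (t : ℤ) (k : ℕ) :
    (∑ j ∈ Finset.range (ℓ * m + k), if bits h d₁ d₂ t j then jump h (t + j) else 0) =
      d₁ + disp h d₂ (t + (ℓ * m : ℕ)) k := by
  rw [Finset.sum_range_add, sum_bits_first h d₁ d₂ t le_rfl, disp_period]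
  congr 1
  refine Finset.sum_congr rfl fun j _ => ?_
  have : ¬ (ℓ * m + j < ℓ * m) := by omega
  simp only [bits, this, if_false, Nat.cast_add, add_assoc]

lemma path_dest (a b : Fin ((m + 1) ^ ℓ)) (t : ℤ) (d : Node ℓ m) :
    ((path h a b t d).dest (sched h)).1 = b := by
  rw [ORNPath.dest, path, foldl_range, two_mul, sum_bits_second, disp_period]
  simp

lemma path_shift (a b : Fin ((m + 1) ^ ℓ)) (t : ℤ) (d : Node ℓ m) :
    path h a b (t + (ℓ * m : ℕ)) d = (path h a b t d).shift (ℓ * m : ℕ) := by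
  have : ∀ j : ℕ, t + (ℓ * m : ℕ) + j = t + j + (ℓ * m : ℕ) := fun j => by ring
  simp only [path, ORNPath.shift, ORNPath.mk.injEq, true_and]
  congr 1
  funext j
  simp only [bits, this, bit_periodic]

/-! ### Edge loads -/

/-- Whether (as `0` or `1`) a packet that leaves `x` at time `t` to travel by `d` within one
period crosses the physical edge `(v, τ)`. At most one summand is nonzero. -/
noncomputable def hit (x : Node ℓ m) (t : ℤ) (d v : Node ℓ m) (τ : ℤ) : ℝ≥0∞ :=
  ∑ k ∈ Finset.range (ℓ * m),
    if t + k = τ ∧ bit h d τ = true ∧ x + disp h d t k = v then 1 else 0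

lemma one_le_hit {x : Node ℓ m} {t : ℤ} {d v : Node ℓ m} {τ : ℤ} {k : ℕ} (hk : k < ℓ * m)
    (hc : t + k = τ ∧ bit h d τ = true ∧ x + disp h d t k = v) : 1 ≤ hit h x t d v τ := by
  refine le_trans ?_ (Finset.single_le_sum (fun _ _ => zero_le) (Finset.mem_range.2 hk))
  rw [if_pos hc]

/-- A crossing of an edge by a two-stage path happens in one of its two stages. The second stage
is described from its endpoint `b`: it starts at `b - d₂`. -/
lemma one_le_hits {a b : Fin ((m + 1) ^ ℓ)} {t : ℤ} {d : Node ℓ m} {e : Fin ((m + 1) ^ ℓ) × ℤ}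
    (hu : (path h a b t d).usesEdge (sched h) e) :
    1 ≤ hit h (lab ℓ m a) t d (lab ℓ m e.1) e.2 +
      hit h (lab ℓ m b - (lab ℓ m b - lab ℓ m a - d)) (t + (ℓ * m : ℕ))
        (lab ℓ m b - lab ℓ m a - d) (lab ℓ m e.1) e.2 := by
  obtain ⟨⟨k, hk⟩, hB, hv⟩ := hu
  have hk2 : k < 2 * (ℓ * m) := by simpa [path] using hk
  simp only [path, List.get_eq_getElem, List.getElem_map, List.getElem_range] at hB
  change (((List.range (2 * (ℓ * m))).map (bits h d (lab ℓ m b - lab ℓ m a - d) t)).take k).foldl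
    (ORNPath.stepFn (sched h)) (a, t) = e at hv
  rw [← List.map_take, List.take_range, min_eq_left hk2.le, foldl_range] at hv
  subst hv
  simp only [Equiv.apply_symm_apply]
  rcases lt_or_ge k (ℓ * m) with hlt | hge
  · refine le_add_right (one_le_hit h hlt ⟨rfl, ?_, ?_⟩)
    · simpa only [bits, hlt, if_true] using hB
    · rw [sum_bits_first h _ _ _ hlt.le]
  · obtain ⟨k, rfl⟩ := Nat.exists_eq_add_of_le hge
    refine le_add_left (one_le_hit h (k := k) (by omega) ⟨by push_cast; ring, ?_, ?_⟩)
    · simpa only [bits, hge.not_gt, if_false] using hB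
    · rw [sum_bits_second]
      abel

lemma card_bit (τ : ℤ) :
    (Finset.univ.filter fun d : Node ℓ m => bit h d τ = true).card = (m + 1) ^ (ℓ - 1) := by
  have := Fintype.card_filter_piFinset_const_eq_of_mem (Finset.univ : Finset (Fin (m + 1)))
    (slot h τ).1 (Finset.mem_univ (slot h τ).2)
  simpa [bit] using this

/-- The load of one stage on an edge. For a fixed displacement `d` and a fixed number `k` of
steps made before the edge, only one start time and one start node lead to the edge, whence a
contribution of at most `r`. The map `st d` gives the node at which the packets of `a` start
this stage, and `c` the delay of the stage. -/
lemma stage_load (w : ℤ → Fin ((m + 1) ^ ℓ) → ℝ≥0∞) (r : ℝ≥0∞) (hw : ∀ t a, w t a ≤ r)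
    (st : Node ℓ m → Fin ((m + 1) ^ ℓ) ≃ Node ℓ m) (c : ℤ) (v : Node ℓ m) (τ : ℤ) :
    ∑' t : ℤ, ∑ a, w t a * ∑ d, hit h (st d a) (t + c) d v τ ≤
      (ℓ * m : ℕ) * (((m + 1) ^ (ℓ - 1) : ℕ) * r) := by
  have key : ∀ (d : Node ℓ m) (k : ℕ), ∑' t : ℤ, ∑ a, w t a *
      (if t + c + k = τ ∧ bit h d τ = true ∧ st d a + disp h d (t + c) k = v then 1 else 0) ≤
      if bit h d τ = true then r else 0 := by
    intro d k
    rw [tsum_eq_single (τ - c - k), Finset.sum_eq_single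
      ((st d).symm (v - disp h d (τ - c - k + c) k))]
    · split_ifs with h1 h2
      · simpa using hw _ _
      · exact absurd h1.2.1 h2
      · simp
      · simp
    · intro a _ ha
      rw [if_neg, mul_zero]
      rintro ⟨-, -, h3⟩
      exact ha (by rw [← h3]; simp)
    · simp
    · intro t ht
      refine Finset.sum_eq_zero fun a _ => ?_
      rw [if_neg, mul_zero]
      rintro ⟨h1, -⟩
      exact ht (by linarith)
  calc ∑' t : ℤ, ∑ a, w t a * ∑ d, hit h (st d a) (t + c) d v τ
      = ∑ d, ∑ k ∈ Finset.range (ℓ * m), ∑' t : ℤ, ∑ a, w t a *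
      (if t + c + k = τ ∧ bit h d τ = true ∧ st d a + disp h d (t + c) k = v then 1 else 0) := by
        simp_rw [← Summable.tsum_finsetSum (fun _ _ => ENNReal.summable)]
        refine tsum_congr fun t => ?_
        simp_rw [hit, Finset.mul_sum]
        rw [Finset.sum_comm]
        exact Finset.sum_congr rfl fun d _ => Finset.sum_comm
    _ ≤ ∑ d : Node ℓ m, ∑ k ∈ Finset.range (ℓ * m), if bit h d τ = true then r else 0 :=
        Finset.sum_le_sum fun d _ => Finset.sum_le_sum fun k _ => key d k
    _ = (ℓ * m : ℕ) * (((m + 1) ^ (ℓ - 1) : ℕ) * r) := by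
        rw [Finset.sum_comm, Finset.sum_const, Finset.card_range, ← Finset.sum_filter,
          Finset.sum_const, card_bit]
        simp only [nsmul_eq_mul]

/-! ### The design -/

open Classical in
/-- The routing scheme: the intermediate node is uniformly distributed. -/
noncomputable def route (a b : Fin ((m + 1) ^ ℓ)) (t : ℤ) (P : ORNPath ((m + 1) ^ ℓ)) : ℝ≥0∞ :=
  ∑ d : Node ℓ m, if P = path h a b t d then (((m + 1) ^ ℓ : ℕ) : ℝ≥0∞)⁻¹ else 0

lemma exists_of_route_ne_zero {a b : Fin ((m + 1) ^ ℓ)} {t : ℤ} {P : ORNPath ((m + 1) ^ ℓ)}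
    (hP : route h a b t P ≠ 0) : ∃ d, P = path h a b t d := by
  by_contra! hne
  exact hP (Finset.sum_eq_zero fun d _ => if_neg (hne d))

open Classical in
lemma tsum_route_mul (a b : Fin ((m + 1) ^ ℓ)) (t : ℤ) (g : ORNPath ((m + 1) ^ ℓ) → ℝ≥0∞) :
    ∑' P, route h a b t P * g P =
      ∑ d, (((m + 1) ^ ℓ : ℕ) : ℝ≥0∞)⁻¹ * g (path h a b t d) := by
  simp_rw [route, Finset.sum_mul, ite_mul, zero_mul]
  rw [Summable.tsum_finsetSum (fun _ _ => ENNReal.summable)]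
  exact Finset.sum_congr rfl fun d _ => tsum_ite_eq _ _

/-- The design: the schedule `sched` with two-stage routing through a uniformly random
intermediate node. -/
noncomputable def design : ORNDesign ((m + 1) ^ ℓ) (ℓ * m) where
  sched := sched h
  route := route h
  route_support a b t P hP := by
    obtain ⟨d, rfl⟩ := exists_of_route_ne_zero h hP
    exact ⟨rfl, path_dest h a b t d⟩
  route_unit a b t := by
    have := tsum_route_mul h a b t (fun _ => 1)
    simp only [mul_one, Finset.sum_const, Finset.card_univ, nsmul_eq_mul] at this
    rw [this, show Fintype.card (Node ℓ m) = (m + 1) ^ ℓ by simp]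
    exact ENNReal.mul_inv_cancel (by positivity) (ENNReal.natCast_ne_top _)
  route_periodic a b t P := by
    classical
    have hinj : ∀ Q : ORNPath ((m + 1) ^ ℓ),
        P.shift (ℓ * m : ℕ) = Q.shift (ℓ * m : ℕ) ↔ P = Q := by
      rintro ⟨⟨y, u⟩, s'⟩
      obtain ⟨⟨x, t'⟩, s⟩ := P
      simp [ORNPath.shift]
    have hiff : ∀ d, P.shift (ℓ * m : ℕ) = path h a b (t + (ℓ * m : ℕ)) d ↔ P = path h a b t d :=
      fun d => by rw [path_shift, hinj]
    simp only [route, hiff]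

lemma maxLatency : MaxLatencyLE (design h) (2 * ℓ * m) := by
  intro a b t P hP
  obtain ⟨d, rfl⟩ := exists_of_route_ne_zero h hP
  simp [ORNPath.latency, path, mul_assoc]

/-- The load on an edge is at most the sum of the loads of the two stages, where the demand enters
only through its row sums (first stage) and its column sums (second stage). -/
lemma edgeFlow_le (D : ℤ → Fin ((m + 1) ^ ℓ) → Fin ((m + 1) ^ ℓ) → ℝ)
    (e : Fin ((m + 1) ^ ℓ) × ℤ) :
    edgeFlow (sched h) (inducedFlow (design h) D) e ≤ (((m + 1) ^ ℓ : ℕ) : ℝ≥0∞)⁻¹ *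
      ((∑' t : ℤ, ∑ a, (∑ b, ENNReal.ofReal (D t a b)) *
          ∑ d, hit h (lab ℓ m a) (t + 0) d (lab ℓ m e.1) e.2) +
        ∑' t : ℤ, ∑ b, (∑ a, ENNReal.ofReal (D t a b)) *
          ∑ d, hit h (lab ℓ m b - d) (t + (ℓ * m : ℕ)) d (lab ℓ m e.1) e.2) := by
  classical
  set U : ORNPath ((m + 1) ^ ℓ) → ℝ≥0∞ := fun P => if P.usesEdge (sched h) e then 1 else 0
    with hU
  have h1 : edgeFlow (sched h) (inducedFlow (design h) D) e =
      ∑' P, inducedFlow (design h) D P * U P := by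
    refine (tsum_subtype {P : ORNPath ((m + 1) ^ ℓ) | P.usesEdge (sched h) e}
      (inducedFlow (design h) D)).trans (tsum_congr fun P => ?_)
    simp [Set.indicator_apply, hU]
  have h2 : ∑' P, inducedFlow (design h) D P * U P =
      ∑' t : ℤ, ∑ a, ∑ b, ENNReal.ofReal (D t a b) *
        ∑ d, (((m + 1) ^ ℓ : ℕ) : ℝ≥0∞)⁻¹ * U (path h a b t d) := by
    simp_rw [inducedFlow, ← ENNReal.tsum_mul_right]
    rw [ENNReal.tsum_comm]
    simp_rw [mul_assoc, ENNReal.tsum_mul_left]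
    have : ∀ a b t, ∑' P, (design h).route a b t P * U P =
      ∑ d, (((m + 1) ^ ℓ : ℕ) : ℝ≥0∞)⁻¹ * U (path h a b t d) :=
      fun a b t => tsum_route_mul h a b t U
    simp_rw [this]
    rw [ENNReal.tsum_prod', tsum_fintype]
    simp_rw [ENNReal.tsum_prod', tsum_fintype]
    simp_rw [Summable.tsum_finsetSum (fun _ _ => ENNReal.summable)]
  rw [h1, h2]
  -- The second stage travels by `d₂ = b - a - d`, which is uniform for every fixed `(a, b)`.
  have h3 : ∀ t a b, ∑ d, U (path h a b t d) ≤
      (∑ d, hit h (lab ℓ m a) (t + 0) d (lab ℓ m e.1) e.2) +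
        ∑ d, hit h (lab ℓ m b - d) (t + (ℓ * m : ℕ)) d (lab ℓ m e.1) e.2 := by
    intro t a b
    rw [← (Equiv.subLeft (lab ℓ m b - lab ℓ m a)).sum_comp (fun d =>
      hit h (lab ℓ m b - d) (t + (ℓ * m : ℕ)) d (lab ℓ m e.1) e.2), ← Finset.sum_add_distrib]
    refine Finset.sum_le_sum fun d _ => ?_
    simp only [hU, Equiv.subLeft_apply, add_zero]
    split_ifs with hu
    · exact one_le_hits h hu
    · exact zero_le
  rw [← ENNReal.tsum_add, ← ENNReal.tsum_mul_left]
  refine ENNReal.tsum_le_tsum fun t => ?_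
  calc ∑ a, ∑ b, ENNReal.ofReal (D t a b) *
        ∑ d, (((m + 1) ^ ℓ : ℕ) : ℝ≥0∞)⁻¹ * U (path h a b t d)
      ≤ ∑ a, ∑ b, ENNReal.ofReal (D t a b) * ((((m + 1) ^ ℓ : ℕ) : ℝ≥0∞)⁻¹ *
        ((∑ d, hit h (lab ℓ m a) (t + 0) d (lab ℓ m e.1) e.2) +
        ∑ d, hit h (lab ℓ m b - d) (t + (ℓ * m : ℕ)) d (lab ℓ m e.1) e.2)) := by
        simp_rw [← Finset.mul_sum]
        gcongr
        exact h3 _ _ _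
    _ = _ := by
        simp_rw [mul_left_comm (ENNReal.ofReal _), ← Finset.mul_sum, mul_add,
          Finset.sum_add_distrib, Finset.sum_mul]
        rw [mul_add]
        congr 2
        exact Finset.sum_comm

/-- The final count: each stage contributes at most
`(m+1)^{-ℓ} · ℓm · (m+1)^{ℓ-1} · 1/(2ℓ) = m / (2(m+1))`. -/
lemma numeric_bound (hℓ : 1 ≤ ℓ) :
    (((m + 1) ^ ℓ : ℕ) : ℝ≥0∞)⁻¹ *
      ((ℓ * m : ℕ) * (((m + 1) ^ (ℓ - 1) : ℕ) * ENNReal.ofReal (1 / (2 * ℓ))) +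
        (ℓ * m : ℕ) * (((m + 1) ^ (ℓ - 1) : ℕ) * ENNReal.ofReal (1 / (2 * ℓ)))) ≤ 1 := by
  obtain ⟨q, rfl⟩ := Nat.exists_eq_add_of_le' hℓ
  rw [ENNReal.inv_mul_le_iff (by positivity) (ENNReal.natCast_ne_top _), mul_one]
  simp only [← ENNReal.ofReal_natCast]
  rw [← ENNReal.ofReal_mul (by positivity), ← ENNReal.ofReal_mul (by positivity),
    ← ENNReal.ofReal_add (by positivity) (by positivity)]
  refine ENNReal.ofReal_le_ofReal ?_
  rw [Nat.add_sub_cancel]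
  push_cast
  have hq : (0 : ℝ) < q + 1 := by positivity
  have hpow : (0 : ℝ) ≤ ((m : ℝ) + 1) ^ q := by positivity
  have : ((q : ℝ) + 1) * m * (((m : ℝ) + 1) ^ q * (1 / (2 * ((q : ℝ) + 1)))) +
      ((q : ℝ) + 1) * m * (((m : ℝ) + 1) ^ q * (1 / (2 * ((q : ℝ) + 1)))) =
      (m : ℝ) * ((m : ℝ) + 1) ^ q := by
    field_simp
    ring
  rw [this, pow_succ]
  nlinarith

lemma guarantees (hℓ : 1 ≤ ℓ) : GuaranteesThroughput (design h) (1 / (2 * ℓ)) := by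
  intro D hD e
  obtain ⟨h0, hrow, hcol⟩ := hD
  refine (edgeFlow_le h D e).trans (le_trans ?_ (numeric_bound (m := m) hℓ))
  gcongr
  · refine stage_load h (fun t a => ∑ b, ENNReal.ofReal (D t a b)) _ (fun t a => ?_)
      (fun _ => lab ℓ m) 0 _ _
    rw [← ENNReal.ofReal_sum_of_nonneg fun b _ => h0 t a b]
    exact ENNReal.ofReal_le_ofReal (hrow t a)
  · refine stage_load h (fun t b => ∑ a, ENNReal.ofReal (D t a b)) _ (fun t b => ?_)
      (fun d => (lab ℓ m).trans (Equiv.subRight d)) _ _ _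
    rw [← ENNReal.ofReal_sum_of_nonneg fun a _ => h0 t a b]
    exact ENNReal.ofReal_le_ofReal (hcol t b)

end EBS

/-- **EBS.** For every integer `ℓ ≥ 1` and every integer `n ≥ 2`, with
`N = n^ℓ` and `T = ℓ(n−1)`, there exists an ORN design on `N` nodes with period `T` that
guarantees throughput `1/(2ℓ)` and has maximum latency at most `2ℓ(n−1)`. -/
theorem ebs_exists (ℓ n : ℕ) (hℓ : 1 ≤ ℓ) (hn : 2 ≤ n) :
    ∃ R : ORNDesign (n ^ ℓ) (ℓ * (n - 1)),
      GuaranteesThroughput R (1 / (2 * ℓ)) ∧ MaxLatencyLE R (2 * ℓ * (n - 1)) := by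
  obtain ⟨m, rfl⟩ := Nat.exists_eq_add_of_le' (one_le_two.trans hn)
  have h : 0 < ℓ * m := Nat.mul_pos hℓ (by omega)
  exact ⟨EBS.design h, EBS.guarantees h hℓ, EBS.maxLatency h⟩
end

section
/- Let h ≥ 1 be an integer, let δ be a real number with 0 < δ ≤ 1/(4(h+1)(1+1/(2h))²), and set ε = δ/4. Let n be a prime number, set N = n^{h+1}, and let Q = max(2h²−h, Q₀) where Q₀ is the least integer such that binom(Q₀,h) ≥ δn; assume n > h + 1 + Q. Then there exists an ORN design on N nodes that guarantees throughput 1/(2(h+1−ε)) and has maximum latency at most (n−1)(3+2h+2Q) − 1. -/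
/-!
The proof is an explicit construction. Write `n = m + 1`, identify the nodes with the vectors
`V = F ^ (h + 1)` over `F = ZMod n`, and let `u` generate `Fˣ`. Time is cut into phases of `m`
timeslots; in phase `q` the schedule translates all nodes successively by the `m` nonzero multiples
of the Vandermonde vector `dir u q = (u ^ (q j))_j`. A path that takes at most one hop in each phase
thus realises an arbitrary linear combination of the direction vectors of the phases it visits.

**Short representations.** Put `K = h + 1 + Q`. Any `h + 1` of the direction vectors of `K`
consecutive phases form a basis of `V`, so every vector is a combination of at most `h + 1` of them,
and of at most `h` of them if it lies in one of the `C = binom(K, h)` hyperplanes spanned by `h` of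
them. Two distinct such hyperplanes meet in codimension two, so Cauchy–Schwarz applied to the number
of hyperplanes through a vector shows that they cover at least `C N / (n + C) ≥ (δ / 4) N` vectors
(`card_union_span_vand`). Hence the average number of hops needed is at most `h + 1 - δ / 4`
(`exists_rep`).

**Routing.** As in Valiant load balancing, a message from `a` to `b` first makes a uniformly random
displacement during `K` phases, and then the complementary one, again uniformly distributed, during
the next `K` phases. The chosen representation `rep` is moreover rescaled by a uniformly random unit,
independently for both legs, which makes every nonzero multiple of a direction equally likely.
The diagonal matrix `tw u x` carries the directions of phases `0, …, K - 1` to those of phases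
`x, …, x + K - 1`, so one choice of `rep` serves all starting times.

**Load.** On the first leg, the source of a message crossing a given edge is determined by its
random sample, so the row sums of the demand bound the load; on the second leg the destination is
determined by the sample, and the column sums bound it (`card_usesEdge_le`, `load_le`). Summing over
all timeslots, demand of throughput `r` puts load at most `2 r` times the average number of hops of a
leg on each edge (`vbsDesign_throughput`), which is at most `1` for `r = 1 / (2 (h + 1 - δ / 4))`.
A path waits at most `m - 1` timeslots for the next phase and then uses `2 K` phases, which gives
latency `m (2 K + 1) - 1`.
-/

open scoped ENNReal

/-! ### Short representations over Vandermonde vectors -/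

section LinearAlgebra

variable {F : Type*} [Field F]

/-- The Vandermonde vector `(1, x i, …, (x i) ^ h)`. -/
def vand {K : ℕ} (h : ℕ) (x : Fin K → F) (i : Fin K) : Fin (h + 1) → F := fun j => x i ^ (j : ℕ)

lemma span_vand_eq_top {K h : ℕ} {x : Fin K → F} (hx : Function.Injective x)
    {S : Finset (Fin K)} (hS : S.card = h + 1) :
    Submodule.span F (vand h x '' (S : Set (Fin K))) = ⊤ ∧
      LinearIndependent F (fun i : S => vand h x i) := by
  let e : Fin (h + 1) ≃ S := (S.equivFinOfCardEq hS).symm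
  have hdet : (Matrix.vandermonde (fun k => x (e k))).det ≠ 0 :=
    Matrix.det_vandermonde_ne_zero_iff.2 (hx.comp (Subtype.val_injective.comp e.injective))
  have hli : LinearIndependent F (fun k => vand h x (e k)) :=
    Matrix.linearIndependent_rows_of_det_ne_zero hdet
  have hli' : LinearIndependent F (fun i : S => vand h x i) := by
    have := (linearIndependent_equiv e.symm).2 hli
    simpa [Function.comp_def] using this
  refine ⟨?_, hli'⟩
  have h1 := hli'.span_eq_top_of_card_eq_finrank' (by simp [hS])
  rw [← h1]
  congr 1
  ext y
  simp

lemma linearIndependent_vand {K h : ℕ} {x : Fin K → F} (hx : Function.Injective x)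
    {S : Finset (Fin K)} (hS : S.card ≤ h + 1) (hK : h + 1 ≤ K) :
    LinearIndependent F (fun i : S => vand h x i) := by
  obtain ⟨S', h1, h2⟩ := Finset.exists_superset_card_eq hS (by simpa using hK)
  have := (span_vand_eq_top hx h2).2
  exact this.comp (fun i : S => (⟨i, h1 i.2⟩ : S')) (fun a b hab => by
    apply Subtype.ext
    simpa using hab)

lemma finrank_span_vand {K h : ℕ} {x : Fin K → F} (hx : Function.Injective x)
    {S : Finset (Fin K)} (hS : S.card = h) (hK : h + 1 ≤ K) :
    Module.finrank F (Submodule.span F (vand h x '' (S : Set (Fin K)))) = h := by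
  have h1 := finrank_span_eq_card (linearIndependent_vand hx (S := S) (h := h) (by omega) hK)
  have h2 : Set.range (fun i : S => vand h x i) = vand h x '' (S : Set (Fin K)) := by
    ext y; simp
  rw [h2] at h1
  simpa [hS] using h1

lemma finrank_inf_span_vand {K h : ℕ} {x : Fin K → F} (hx : Function.Injective x)
    {S S' : Finset (Fin K)} (hS : S.card = h) (hS' : S'.card = h) (hne : S ≠ S')
    (hK : h + 1 ≤ K) :
    Module.finrank F (Submodule.span F (vand h x '' (S : Set (Fin K))) ⊓
      Submodule.span F (vand h x '' (S' : Set (Fin K))) : Submodule F (Fin (h + 1) → F))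
        = h - 1 := by
  have hsup : Submodule.span F (vand h x '' (S : Set (Fin K))) ⊔
      Submodule.span F (vand h x '' (S' : Set (Fin K))) = ⊤ := by
    rw [← Submodule.span_union, ← Set.image_union, eq_top_iff]
    have hcard : h + 1 ≤ (S ∪ S').card := by
      have : S ⊂ S ∪ S' := by
        refine Finset.ssubset_iff_subset_ne.2 ⟨Finset.subset_union_left, fun heq => hne ?_⟩
        have hsub : S' ⊆ S := heq ▸ Finset.subset_union_right
        exact (Finset.eq_of_subset_of_card_le hsub (by omega)).symm
      have := Finset.card_lt_card this
      omega
    obtain ⟨W, hW, hWc⟩ := Finset.exists_subset_card_eq hcard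
    rw [← (span_vand_eq_top hx hWc).1]
    refine Submodule.span_mono (Set.image_mono ?_)
    rw [← Finset.coe_union]
    exact_mod_cast hW
  have := Submodule.finrank_sup_add_finrank_inf_eq
    (Submodule.span F (vand h x '' (S : Set (Fin K))))
    (Submodule.span F (vand h x '' (S' : Set (Fin K))))
  rw [hsup, finrank_span_vand hx hS hK, finrank_span_vand hx hS' hK] at this
  simp at this
  omega

lemma exists_support_of_mem_span {K h : ℕ} {x : Fin K → F} {S : Finset (Fin K)}
    {c : Fin (h + 1) → F} (hc : c ∈ Submodule.span F (vand h x '' (S : Set (Fin K)))) :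
    ∃ f : Fin K → F, (∑ i, f i • vand h x i) = c ∧ ∀ i ∉ S, f i = 0 := by
  rw [Finsupp.mem_span_image_iff_linearCombination] at hc
  obtain ⟨l, hl, rfl⟩ := hc
  refine ⟨l, ?_, fun i hi => ?_⟩
  · rw [Finsupp.linearCombination_apply, Finsupp.sum_fintype _ _ (by simp)]
  · rw [Finsupp.mem_supported] at hl
    by_contra hne
    exact hi (by exact_mod_cast hl (Finsupp.mem_support_iff.2 hne))

open Classical in
/-- The hyperplanes spanned by `h` of the `K` Vandermonde vectors cover at least
`C n ^ (h + 1) / (n + C)` vectors, where `C = binom(K, h)`. With `X c` the number of these hyperplanes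
through `c`, this is Cauchy–Schwarz `(∑ X) ^ 2 ≤ #{X ≠ 0} * ∑ X ^ 2`, where `∑ X = C n ^ h`, and
`∑ X ^ 2 ≤ C n ^ h + C ^ 2 n ^ (h - 1)` because distinct hyperplanes meet in dimension `h - 1`. -/
lemma card_union_span_vand [Fintype F] {K h : ℕ} (hh : 1 ≤ h) {x : Fin K → F}
    (hx : Function.Injective x) (hK : h + 1 ≤ K) :
    K.choose h * Fintype.card F ^ (h + 1) ≤
      (Finset.univ.filter fun c : Fin (h + 1) → F =>
        ∃ S ∈ Finset.powersetCard h (Finset.univ : Finset (Fin K)),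
          c ∈ Submodule.span F (vand h x '' (S : Set (Fin K)))).card *
      (Fintype.card F + K.choose h) := by
  set U : Finset (Fin K) → Submodule F (Fin (h + 1) → F) := fun S =>
    Submodule.span F (vand h x '' (S : Set (Fin K))) with hU
  set A : Finset (Finset (Fin K)) := Finset.powersetCard h Finset.univ with hA
  set G := Finset.univ.filter fun c : Fin (h + 1) → F => ∃ S ∈ A, c ∈ U S with hG
  set n := Fintype.card F with hn
  set C := K.choose h with hC
  have hAc : A.card = C := by simp [hA, hC]
  have hcard : ∀ W : Submodule F (Fin (h + 1) → F),
      (Finset.univ.filter fun c => c ∈ W).card = n ^ Module.finrank F W := by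
    intro W
    rw [← Module.card_eq_pow_finrank (K := F) (V := W), Fintype.card_subtype]
  let X : (Fin (h + 1) → F) → ℕ := fun c => ∑ S ∈ A, if c ∈ U S then 1 else 0
  have hX0 : ∀ c, c ∉ G → X c = 0 := by
    intro c hc
    simp only [hG, Finset.mem_filter, Finset.mem_univ, true_and, not_exists, not_and] at hc
    exact Finset.sum_eq_zero fun S hS => if_neg (hc S hS)
  have hsum1 : ∑ c ∈ G, X c = C * n ^ h := by
    rw [Finset.sum_subset (Finset.subset_univ G) (fun c _ hc => hX0 c hc), Finset.sum_comm,
      ← hAc, ← smul_eq_mul, ← Finset.sum_const]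
    refine Finset.sum_congr rfl fun S hS => ?_
    rw [← Finset.card_filter, hcard, finrank_span_vand hx (Finset.mem_powersetCard.1 hS).2 hK]
  have hsum2 : ∑ c ∈ G, X c ^ 2 ≤ C * n ^ h + C * C * n ^ (h - 1) := by
    rw [Finset.sum_subset (Finset.subset_univ G) (fun c _ hc => by rw [hX0 c hc]; rfl)]
    have hsq : ∀ c, X c ^ 2 = ∑ S ∈ A, ∑ S' ∈ A, if c ∈ U S ⊓ U S' then 1 else 0 := by
      intro c
      rw [sq, Finset.sum_mul_sum]
      refine Finset.sum_congr rfl fun S _ => Finset.sum_congr rfl fun S' _ => ?_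
      by_cases h1 : c ∈ U S <;> by_cases h2 : c ∈ U S' <;> simp [h1, h2]
    simp_rw [hsq]
    rw [Finset.sum_comm]
    have : ∀ S ∈ A, (∑ c, ∑ S' ∈ A, if c ∈ U S ⊓ U S' then 1 else 0) ≤
        n ^ h + C * n ^ (h - 1) := by
      intro S hS
      rw [Finset.sum_comm, ← Finset.add_sum_erase _ _ hS]
      gcongr
      · rw [← Finset.card_filter, hcard, inf_idem,
          finrank_span_vand hx (Finset.mem_powersetCard.1 hS).2 hK]
      · calc _ ≤ ∑ S' ∈ A.erase S, n ^ (h - 1) := by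
              refine Finset.sum_le_sum fun S' hS' => ?_
              rw [← Finset.card_filter, hcard, finrank_inf_span_vand hx
                (Finset.mem_powersetCard.1 hS).2
                (Finset.mem_powersetCard.1 (Finset.mem_of_mem_erase hS')).2
                (Finset.ne_of_mem_erase hS').symm hK]
          _ ≤ _ := by
              rw [Finset.sum_const, smul_eq_mul, ← hAc]
              gcongr
              exact Finset.erase_subset _ _
    calc _ ≤ ∑ S ∈ A, (n ^ h + C * n ^ (h - 1)) := Finset.sum_le_sum this
      _ = _ := by rw [Finset.sum_const, hAc, smul_eq_mul]; ring
  have hCS := sq_sum_le_card_mul_sum_sq (s := G) (f := X)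
  rw [hsum1] at hCS
  have hCS' := hCS.trans (Nat.mul_le_mul_left _ hsum2)
  have hnpos : 0 < n := Fintype.card_pos
  have hCpos : 0 < C := Nat.choose_pos (by omega)
  obtain ⟨k, rfl⟩ : ∃ k, h = k + 1 := ⟨h - 1, by omega⟩
  have hpos : 0 < C * n ^ k := by positivity
  refine le_of_mul_le_mul_left ?_ hpos
  calc _ = (C * n ^ (k + 1)) ^ 2 := by ring
    _ ≤ _ := hCS'
    _ = _ := by simp only [Nat.add_sub_cancel, Nat.cast_id]; ring

open Classical in
/-- Every vector is a combination of the `K` Vandermonde vectors in such a way that the average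
number of nonzero coefficients is at most `h + 1 - δ / 4`: it is at most `h` on the covered vectors and
at most `h + 1` elsewhere. -/
lemma exists_rep [Fintype F] {K h : ℕ} (hh : 1 ≤ h) {x : Fin K → F}
    (hx : Function.Injective x) (hK : h + 1 ≤ K) {δ : ℝ} (hδ0 : 0 < δ) (hδ1 : δ ≤ 1)
    (hC : δ * Fintype.card F ≤ K.choose h) :
    ∃ rep : (Fin (h + 1) → F) → Fin K → F, (∀ c, ∑ i, rep c i • vand h x i = c) ∧
      ((∑ c, (Finset.univ.filter fun i => rep c i ≠ 0).card : ℕ) : ℝ) ≤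
        (Fintype.card F : ℝ) ^ (h + 1) * (h + 1 - δ / 4) := by
  set G := Finset.univ.filter fun c : Fin (h + 1) → F =>
      ∃ S ∈ Finset.powersetCard h (Finset.univ : Finset (Fin K)),
        c ∈ Submodule.span F (vand h x '' (S : Set (Fin K))) with hG
  have hcard := card_union_span_vand hh hx hK
  rw [← hG] at hcard
  have key : ∀ c : Fin (h + 1) → F, ∃ f : Fin K → F, (∑ i, f i • vand h x i = c) ∧
      (Finset.univ.filter fun i => f i ≠ 0).card + (if c ∈ G then 1 else 0) ≤ h + 1 := by
    intro c
    have aux : ∀ (S : Finset (Fin K)) (f : Fin K → F), (∀ i ∉ S, f i = 0) →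
        (Finset.univ.filter fun i => f i ≠ 0).card ≤ S.card := by
      intro S f hf
      refine Finset.card_le_card fun i hi => ?_
      by_contra hiS
      exact (Finset.mem_filter.1 hi).2 (hf i hiS)
    by_cases hc : c ∈ G
    · obtain ⟨S, hS, hcS⟩ := (Finset.mem_filter.1 hc).2
      obtain ⟨f, hf, hf0⟩ := exists_support_of_mem_span hcS
      refine ⟨f, hf, ?_⟩
      have := aux S f hf0
      rw [(Finset.mem_powersetCard.1 hS).2] at this
      simpa [hc] using this
    · obtain ⟨S, -, hS⟩ := Finset.exists_subset_card_eq
        (s := (Finset.univ : Finset (Fin K))) (n := h + 1) (by simpa using hK)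
      obtain ⟨f, hf, hf0⟩ := exists_support_of_mem_span (x := x) (S := S) (c := c)
        (by rw [(span_vand_eq_top hx hS).1]; trivial)
      refine ⟨f, hf, ?_⟩
      have := aux S f hf0
      simpa [hc, hS] using this
  choose rep hrep hw using key
  refine ⟨rep, hrep, ?_⟩
  have hsum : (∑ c, (Finset.univ.filter fun i => rep c i ≠ 0).card) + G.card ≤
      Fintype.card F ^ (h + 1) * (h + 1) := by
    have h1 := Finset.sum_le_sum (s := Finset.univ) fun c _ => hw c
    rw [Finset.sum_add_distrib, ← Finset.card_filter] at h1
    simpa using h1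
  have hsumR : ((∑ c, (Finset.univ.filter fun i => rep c i ≠ 0).card : ℕ) : ℝ) + G.card ≤
      (Fintype.card F : ℝ) ^ (h + 1) * (h + 1) := by exact_mod_cast hsum
  have hcardR : (K.choose h : ℝ) * (Fintype.card F : ℝ) ^ (h + 1) ≤
      G.card * (Fintype.card F + K.choose h) := by exact_mod_cast hcard
  have hnpos : (0 : ℝ) < Fintype.card F := by exact_mod_cast Fintype.card_pos
  have hG' : δ / 4 * (Fintype.card F : ℝ) ^ (h + 1) ≤ G.card := by
    have hNpos : (0 : ℝ) < (Fintype.card F : ℝ) ^ (h + 1) := by positivity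
    generalize (Fintype.card F : ℝ) ^ (h + 1) = N at *
    have hCpos : (0 : ℝ) < K.choose h := lt_of_lt_of_le (by positivity) hC
    generalize (K.choose h : ℝ) = C at *
    generalize (G.card : ℝ) = g at *
    generalize (Fintype.card F : ℝ) = n at *
    -- `C / (n + C) ≥ δ / 4` since `δ n ≤ C` and `δ C ≤ C`
    by_contra! hlt
    have h1 : g * (n + C) < δ / 4 * N * (n + C) := by gcongr
    have h2 : δ * C ≤ C := by nlinarith
    nlinarith [mul_le_mul_of_nonneg_right hC hNpos.le, mul_le_mul_of_nonneg_right h2 hNpos.le]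
  linarith

end LinearAlgebra

/-! ### The schedule and paths given by coefficients -/

section Schedule

variable {m d N K : ℕ}

/-- Multiplication by the diagonal matrix with entries `u ^ (q j)`. It carries the direction of
phase `r` to the direction of phase `q + r`. -/
def tw (u : (ZMod (m + 1))ˣ) (q : ℤ) (c : Fin d → ZMod (m + 1)) : Fin d → ZMod (m + 1) :=
  fun j => ((u ^ (q * (j : ℕ)) : (ZMod (m + 1))ˣ) : ZMod (m + 1)) * c j

/-- The direction `(u ^ (q j))_j` of phase `q`. -/
def dir (u : (ZMod (m + 1))ˣ) (q : ℤ) : Fin d → ZMod (m + 1) := tw u q 1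

lemma tw_tw (u : (ZMod (m + 1))ˣ) (q r : ℤ) (c : Fin d → ZMod (m + 1)) :
    tw u q (tw u r c) = tw u (q + r) c := by
  funext j
  simp [tw, add_mul, zpow_add, mul_assoc]

lemma tw_zero (u : (ZMod (m + 1))ˣ) (c : Fin d → ZMod (m + 1)) : tw u 0 c = c := by
  funext j
  simp [tw]

lemma dir_add (u : (ZMod (m + 1))ˣ) (q r : ℤ) :
    (dir u (q + r) : Fin d → ZMod (m + 1)) = tw u q (dir u r) := by
  rw [dir, dir, tw_tw]

lemma tw_period {u : (ZMod (m + 1))ˣ} (hu : u ^ m = 1) (q : ℤ) (c : Fin d → ZMod (m + 1)) :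
    tw u (q + m) c = tw u q c := by
  funext j
  simp [tw, add_mul, zpow_add, zpow_mul, hu]

lemma tw_sum (u : (ZMod (m + 1))ˣ) (q : ℤ) {ι : Type*} (s : Finset ι) (a : ι → ZMod (m + 1))
    (f : ι → Fin d → ZMod (m + 1)) :
    tw u q (∑ i ∈ s, a i • f i) = ∑ i ∈ s, a i • tw u q (f i) := by
  funext j
  simp only [tw, Finset.sum_apply, Pi.smul_apply, smul_eq_mul, Finset.mul_sum]
  exact Finset.sum_congr rfl fun i _ => by ring

/-- The scalar used in timeslot `τ`: the position of `τ` within its phase of `m` timeslots, counted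
from one. Over a phase it runs through the nonzero elements of `ZMod (m + 1)`. -/
def scal (m : ℕ) (τ : ℤ) : ZMod (m + 1) := ((τ % m : ℤ) : ZMod (m + 1)) + 1

lemma scal_ne_zero (hm : 0 < m) (τ : ℤ) : scal m τ ≠ 0 := by
  have h0 : 0 ≤ τ % (m : ℤ) := Int.emod_nonneg _ (by omega)
  have h1 : τ % (m : ℤ) < m := Int.emod_lt_of_pos _ (by omega)
  intro h
  have h2 : ((τ % m + 1 : ℤ) : ZMod (m + 1)) = 0 := by
    rw [← h, scal]; push_cast; ring
  rw [ZMod.intCast_zmod_eq_zero_iff_dvd] at h2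
  have := Int.le_of_dvd (by omega) h2
  push_cast at this
  omega

/-- The translation performed by the schedule in timeslot `τ`. Timeslot `τ` belongs to phase
`τ / m` (floor division). -/
def hop (u : (ZMod (m + 1))ˣ) (τ : ℤ) : Fin d → ZMod (m + 1) := scal m τ • dir u (τ / m)

lemma hop_period {u : (ZMod (m + 1))ˣ} (hm : 0 < m) (hu : u ^ m = 1) (τ : ℤ) :
    (hop u (τ + (m * m : ℕ)) : Fin d → ZMod (m + 1)) = hop u τ := by
  have h1 : (τ + (m * m : ℕ)) / (m : ℤ) = τ / m + m := by
    push_cast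
    rw [Int.add_mul_ediv_right _ _ (by omega)]
  have h2 : (τ + (m * m : ℕ)) % (m : ℤ) = τ % m := by
    push_cast
    rw [Int.add_mul_emod_self_right]
  rw [hop, hop, scal, scal, h1, h2, dir, dir, tw_period hu]

/-- The connection schedule in which timeslot `τ` translates all nodes by `hop u τ`, the nodes being
identified with vectors by `E`. -/
def vbsSched (hm : 0 < m) (u : (ZMod (m + 1))ˣ) (hu : u ^ m = 1)
    (E : Fin N ≃ (Fin d → ZMod (m + 1))) : ConnSched N (m * m) where
  Tpos := Nat.mul_pos hm hm
  perm τ := (E.trans (Equiv.addRight (hop u τ))).trans E.symm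
  periodic τ := by rw [hop_period hm hu]

/-- The displacement in timeslot `τ` of a path following the coefficients `f`: it takes the physical
edge precisely when the scalar of the timeslot is the coefficient of the current phase. -/
def moved (u : (ZMod (m + 1))ˣ) (f : ℤ → ZMod (m + 1)) (τ : ℤ) : Fin d → ZMod (m + 1) :=
  if f (τ / m) = scal m τ then hop u τ else 0

/-- The path of `L` steps from `(a, t)` which takes, in phase `q`, the physical edge with scalar
`f q`. It takes none if `f q = 0`, as scalars are nonzero. -/
def coefPath (f : ℤ → ZMod (m + 1)) (a : Fin N) (t : ℤ) (L : ℕ) : ORNPath N :=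
  ⟨(a, t), (List.range L).map fun k : ℕ => decide (f ((t + k) / m) = scal m (t + k))⟩

/-- The end vertex of `coefPath`, in terms of the accumulated displacement. -/
lemma foldl_coefPath (hm : 0 < m) (u : (ZMod (m + 1))ˣ) (hu : u ^ m = 1)
    (E : Fin N ≃ (Fin d → ZMod (m + 1))) (f : ℤ → ZMod (m + 1)) (a : Fin N) (t : ℤ) (k : ℕ) :
    (coefPath f a t k).dest (vbsSched hm u hu E) =
      (E.symm (E a + ∑ j ∈ Finset.range k, moved u f (t + j)), t + k) := by
  induction k with
  | zero => simp [coefPath, ORNPath.dest]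
  | succ k ih =>
    simp only [coefPath, ORNPath.dest] at ih ⊢
    rw [List.range_succ, List.map_append, List.foldl_append, ih, Finset.sum_range_succ]
    by_cases hb : f ((t + k) / m) = scal m (t + k)
    · simp [ORNPath.stepFn, hb, vbsSched, moved, add_assoc]
    · simp [ORNPath.stepFn, hb, moved, add_assoc]

/-- A path following `f` crosses the edge `(y, τ)` only if its coefficient in the phase of `τ` is the
scalar of `τ`, and it has reached `y` by then. -/
lemma usesEdge_coefPath (hm : 0 < m) (u : (ZMod (m + 1))ˣ) (hu : u ^ m = 1)
    (E : Fin N ≃ (Fin d → ZMod (m + 1))) (f : ℤ → ZMod (m + 1)) (a : Fin N) (t : ℤ) (L : ℕ)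
    (y : Fin N) (τ : ℤ) (hP : (coefPath f a t L).usesEdge (vbsSched hm u hu E) (y, τ)) :
    ∃ k < L, τ = t + k ∧ f (τ / m) = scal m τ ∧
      E y = E a + ∑ j ∈ Finset.range k, moved u f (t + j) := by
  obtain ⟨⟨k, hk⟩, h1, h2⟩ := hP
  have hk' : k < L := by simpa [coefPath] using hk
  have h3 := foldl_coefPath hm u hu E f a t k
  have h4 : (coefPath f a t L).vertexAt (vbsSched hm u hu E) k =
      (coefPath f a t k).dest (vbsSched hm u hu E) := by
    simp [ORNPath.vertexAt, ORNPath.dest, coefPath, ← List.map_take, List.take_range,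
      min_eq_left hk'.le]
  simp only at h2
  rw [h4, h3] at h2
  obtain ⟨h5, h6⟩ := Prod.mk.inj h2
  subst h6
  refine ⟨k, hk', rfl, by simpa [coefPath] using h1, ?_⟩
  rw [← h5, Equiv.apply_symm_apply]

/-- The first phase that starts at time `t` or later, i.e. `⌈t / m⌉`. -/
def startPhase (m : ℕ) (t : ℤ) : ℤ := (t - 1) / m + 1

lemma sum_range_mul_blocks {M : Type*} [AddCommMonoid M] (g : ℕ → M) (B : ℕ) :
    ∑ j ∈ Finset.range (B * m), g j =
      ∑ i ∈ Finset.range B, ∑ r ∈ Finset.range m, g (i * m + r) := by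
  induction B with
  | zero => simp
  | succ B ih => rw [Finset.sum_range_succ, ← ih, Nat.succ_mul, Finset.sum_range_add]

/-- Over a complete phase, the displacement is the coefficient times the direction, since each
nonzero scalar occurs exactly once. -/
lemma sum_phase (hm : 0 < m) (u : (ZMod (m + 1))ˣ) (f : ℤ → ZMod (m + 1)) (q : ℤ) :
    ∑ r ∈ Finset.range m, (moved u f (q * m + r) : Fin d → ZMod (m + 1)) = f q • dir u q := by
  have hdiv : ∀ r ∈ Finset.range m, (q * m + r : ℤ) / m = q := by
    intro r hr
    rw [Finset.mem_range] at hr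
    rw [add_comm, Int.add_mul_ediv_right _ _ (by omega),
      Int.ediv_eq_zero_of_lt (by omega) (by omega), zero_add]
  have hsc : ∀ r ∈ Finset.range m, scal m (q * m + r : ℤ) = (r : ZMod (m + 1)) + 1 := by
    intro r hr
    rw [Finset.mem_range] at hr
    rw [scal, add_comm (q * (m : ℤ)), Int.add_mul_emod_self_right,
      Int.emod_eq_of_lt (by omega) (by omega)]
    simp
  have hterm : ∀ r ∈ Finset.range m, (moved u f (q * m + r) : Fin d → ZMod (m + 1)) =
      if f q = (r : ZMod (m + 1)) + 1 then f q • dir u q else 0 := by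
    intro r hr
    rw [moved, hop, hdiv r hr, hsc r hr]
    split_ifs with h
    · rw [h]
    · rfl
  rw [Finset.sum_congr rfl hterm]
  by_cases h0 : f q = 0
  · simp [h0]
  · have hv : 0 < (f q).val := ZMod.val_pos.2 h0
    have hv' : (f q).val < m + 1 := ZMod.val_lt _
    -- the unique offset within the phase at which the scalar is `f q`
    rw [Finset.sum_eq_single ((f q).val - 1)]
    · rw [if_pos]
      have : (((f q).val - 1 + 1 : ℕ) : ZMod (m + 1)) = f q := by
        rw [Nat.sub_add_cancel hv]; simp
      exact this.symm.trans (Nat.cast_succ _)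
    · intro r hr hne
      rw [if_neg]
      intro heq
      apply hne
      rw [Finset.mem_range] at hr
      have : (f q).val = r + 1 := by
        rw [heq]
        have : ((r : ZMod (m + 1)) + 1) = ((r + 1 : ℕ) : ZMod (m + 1)) := by push_cast; rfl
        rw [this, ZMod.val_natCast, Nat.mod_eq_of_lt (by omega)]
      omega
    · intro hr
      exact absurd (Finset.mem_range.2 (by omega)) hr

lemma startPhase_bounds (hm : 0 < m) (t : ℤ) :
    t ≤ startPhase m t * m ∧ startPhase m t * m < t + m := by
  have h1 := Int.emod_add_mul_ediv (t - 1) m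
  have h2 := Int.emod_nonneg (t - 1) (show (m : ℤ) ≠ 0 by omega)
  have h3 := Int.emod_lt_of_pos (t - 1) (show (0 : ℤ) < m by omega)
  rw [startPhase]
  constructor <;> nlinarith

lemma moved_eq_zero (hm : 0 < m) (u : (ZMod (m + 1))ˣ) {f : ℤ → ZMod (m + 1)} {τ : ℤ}
    (h : f (τ / m) = 0) : (moved u f τ : Fin d → ZMod (m + 1)) = 0 := by
  rw [moved, h, if_neg (scal_ne_zero hm τ).symm]

/-- If `f` is supported on the first `B` complete phases after `t`, then `m (B + 1) - 1` steps suffice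
to cover all of them, whatever the offset of `t` within its phase. -/
lemma sum_moved (hm : 0 < m) (u : (ZMod (m + 1))ˣ) (f : ℤ → ZMod (m + 1)) (t : ℤ) (B : ℕ)
    (hf : ∀ q, q < startPhase m t ∨ startPhase m t + B ≤ q → f q = 0) :
    ∑ j ∈ Finset.range (m * (B + 1) - 1), (moved u f (t + j) : Fin d → ZMod (m + 1)) =
      ∑ i ∈ Finset.range B, f (startPhase m t + i) • dir u (startPhase m t + i) := by
  obtain ⟨h1, h2⟩ := startPhase_bounds hm t
  set x := startPhase m t with hx
  -- `e` timeslots pass before phase `x` starts, and `m - 1 - e` after the last used phase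
  obtain ⟨e, he⟩ : ∃ e : ℕ, x * m = t + e := ⟨(x * m - t).toNat, by omega⟩
  have hem : e < m := by omega
  have hL : m * (B + 1) - 1 = e + (B * m + (m - 1 - e)) := by
    have : m * (B + 1) = B * m + m := by ring
    omega
  rw [hL, Finset.sum_range_add, Finset.sum_range_add, sum_range_mul_blocks]
  have hA : ∑ j ∈ Finset.range e, (moved u f (t + j) : Fin d → ZMod (m + 1)) = 0 := by
    refine Finset.sum_eq_zero fun j hj => moved_eq_zero hm u (hf _ (Or.inl ?_))
    rw [Finset.mem_range] at hj
    exact Int.ediv_lt_of_lt_mul (by omega) (by omega)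
  have hC : ∑ j ∈ Finset.range (m - 1 - e),
      (moved u f (t + (e + (B * m + j) : ℕ)) : Fin d → ZMod (m + 1)) = 0 := by
    refine Finset.sum_eq_zero fun j hj => moved_eq_zero hm u (hf _ (Or.inr ?_))
    refine (Int.le_ediv_iff_mul_le (by omega)).2 ?_
    push_cast
    nlinarith
  rw [hA, hC, zero_add, add_zero]
  refine Finset.sum_congr rfl fun i _ => ?_
  rw [← sum_phase hm u f]
  refine Finset.sum_congr rfl fun r _ => ?_
  congr 1
  push_cast
  linarith

end Schedule

/-! ### Flows obtained by uniform sampling of paths -/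

section Sampling

variable {N : ℕ} {Ω : Type*} [Fintype Ω]

open Classical in
/-- The unit flow giving the path `p ω` weight `1 / |Ω|` for each sample `ω`. -/
noncomputable def sampleFlow (p : Ω → ORNPath N) (P : ORNPath N) : ℝ≥0∞ :=
  ∑ ω, if P = p ω then (Fintype.card Ω : ℝ≥0∞)⁻¹ else 0

open Classical in
/-- The flow on paths satisfying `s` is the probability that the sampled path satisfies `s`. -/
lemma tsum_sampleFlow (p : Ω → ORNPath N) (s : ORNPath N → Prop) :
    ∑' P : {P // s P}, sampleFlow p P.val =
      (Finset.univ.filter fun ω => s (p ω)).card * (Fintype.card Ω : ℝ≥0∞)⁻¹ := by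
  simp only [sampleFlow]
  rw [Summable.tsum_finsetSum (fun _ _ => ENNReal.summable), ← nsmul_eq_mul,
    ← Finset.sum_const, Finset.sum_filter]
  refine Finset.sum_congr rfl fun ω _ => ?_
  split_ifs with h
  · rw [tsum_eq_single (⟨p ω, h⟩ : {P // s P})]
    · simp
    · intro P hP
      rw [if_neg]
      exact fun heq => hP (Subtype.ext heq)
  · rw [ENNReal.tsum_eq_zero]
    intro P
    rw [if_neg]
    intro heq
    exact h (heq ▸ P.2)

open Classical in
/-- If each sample satisfying `p` is charged only for the row `z ω` of the demand matrix, then it is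
charged at most `R`. -/
lemma load_le {A B : Type*} [Fintype A] [Fintype B] (D : A → B → ℝ≥0∞) (R : ℝ≥0∞)
    (hD : ∀ a, ∑ b, D a b ≤ R) (p : Ω → Prop) (z : Ω → A) :
    ∑ a, ∑ b, D a b * ((Finset.univ.filter fun ω => p ω ∧ a = z ω).card : ℝ≥0∞) ≤
      R * ((Finset.univ.filter p).card : ℝ≥0∞) := by
  have h1 : ∀ a, ((Finset.univ.filter fun ω => p ω ∧ a = z ω).card : ℝ≥0∞) =
      ∑ ω ∈ Finset.univ.filter p, if a = z ω then 1 else 0 := by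
    intro a
    rw [← Finset.filter_filter, Finset.card_filter]
    push_cast
    rfl
  calc _ = ∑ a, (∑ b, D a b) * ∑ ω ∈ Finset.univ.filter p, (if a = z ω then 1 else 0) := by
        refine Finset.sum_congr rfl fun a _ => ?_
        rw [h1, Finset.sum_mul]
    _ ≤ ∑ a, R * ∑ ω ∈ Finset.univ.filter p, (if a = z ω then 1 else 0) := by
        gcongr with a _
        exact hD a
    _ = _ := by
        rw [← Finset.mul_sum, Finset.sum_comm]
        simp

end Sampling

/-! ### The two-leg routing scheme -/

section Design

variable {m d N : ℕ}

/-- Each phase is the starting phase for exactly `m` timeslots. -/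
lemma tsum_startPhase (hm : 0 < m) (g : ℤ → ℝ≥0∞) :
    ∑' t : ℤ, g (startPhase m t) = m * ∑' x, g x := by
  have : NeZero m := ⟨hm.ne'⟩
  have h1 : ∑' t : ℤ, g (startPhase m t) = ∑' t : ℤ, g (t / m + 1) :=
    (Equiv.subRight (1 : ℤ)).tsum_eq (fun t => g (t / m + 1))
  have h2 : ∑' t : ℤ, g (t / m + 1) = ∑' p : ℤ × Fin m, g (p.1 + 1) :=
    (Int.divModEquiv m).tsum_eq (fun p => g (p.1 + 1))
  have h3 : ∑' x : ℤ, g (x + 1) = ∑' x, g x := (Equiv.addRight (1 : ℤ)).tsum_eq g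
  rw [h1, h2, ENNReal.tsum_prod' , ← h3, ← ENNReal.tsum_mul_left]
  simp

/-- The representation of `c` obtained by rescaling that of `l⁻¹ • c`. For uniformly random `c` and
`l`, each coefficient is equally likely to be any of the nonzero scalars. -/
def coef (rep : (Fin d → ZMod (m + 1)) → ℤ → ZMod (m + 1)) (c : Fin d → ZMod (m + 1))
    (l : (ZMod (m + 1))ˣ) (i : ℤ) : ZMod (m + 1) := l * rep (l⁻¹ • c) i

lemma sum_coef {K : ℕ} {u : (ZMod (m + 1))ˣ}
    {rep : (Fin d → ZMod (m + 1)) → ℤ → ZMod (m + 1)}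
    (hrep : ∀ c, ∑ i ∈ Finset.range K, rep c i • dir u i = c) (c : Fin d → ZMod (m + 1))
    (l : (ZMod (m + 1))ˣ) : ∑ i ∈ Finset.range K, coef rep c l i • dir u i = c := by
  simp only [coef, mul_smul]
  rw [← Finset.smul_sum, hrep]
  exact smul_inv_smul l c

open Classical in
/-- The probability that the `i`-th coefficient equals a given nonzero scalar `σ` is at most `1 / m`
times the probability that the `i`-th coefficient of `rep c` is nonzero. Indeed a sample satisfying
`coef rep c l i = σ` is determined by `l⁻¹ • c` and the third component, because
`l = σ / rep (l⁻¹ • c) i`. -/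
lemma card_coef_le [Fact (m + 1).Prime] (rep : (Fin d → ZMod (m + 1)) → ℤ → ZMod (m + 1)) (i : ℤ)
    {σ : ZMod (m + 1)} (hσ : σ ≠ 0) :
    (Finset.univ.filter fun ω : (Fin d → ZMod (m + 1)) × (ZMod (m + 1))ˣ × (ZMod (m + 1))ˣ =>
      coef rep ω.1 ω.2.1 i = σ).card ≤ m * (Finset.univ.filter fun c => rep c i ≠ 0).card := by
  have hu : (Finset.univ : Finset (ZMod (m + 1))ˣ).card = m := by
    rw [Finset.card_univ, ZMod.card_units_eq_totient, Nat.totient_prime Fact.out]; rfl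
  rw [mul_comm]
  refine le_of_le_of_eq ?_ (congrArg _ hu)
  rw [← Finset.card_product]
  refine Finset.card_le_card_of_injOn (fun ω => (ω.2.1⁻¹ • ω.1, ω.2.2)) ?_ ?_
  · rintro ⟨c, l, l'⟩ hω
    have hω' : (l : ZMod (m + 1)) * rep (l⁻¹ • c) i = σ := (Finset.mem_filter.1 hω).2
    refine Finset.mem_product.2 ⟨Finset.mem_filter.2 ⟨Finset.mem_univ _, fun h0 => ?_⟩,
      Finset.mem_univ _⟩
    rw [h0, mul_zero] at hω'
    exact hσ hω'.symm
  · rintro ⟨c, l, l'⟩ h1 ⟨c₂, l₂, l₂'⟩ h2 heq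
    replace h1 : (l : ZMod (m + 1)) * rep (l⁻¹ • c) i = σ := (Finset.mem_filter.1 h1).2
    replace h2 : (l₂ : ZMod (m + 1)) * rep (l₂⁻¹ • c₂) i = σ := (Finset.mem_filter.1 h2).2
    simp only [Prod.mk.injEq] at heq ⊢
    obtain ⟨hc, hl⟩ := heq
    rw [← hc, ← h1] at h2
    have hne : rep (l⁻¹ • c) i ≠ 0 := by
      intro h0
      rw [h0, mul_zero] at h1
      exact hσ h1.symm
    have hll : l = l₂ := (Units.ext (mul_right_cancel₀ hne h2)).symm
    subst hll
    exact ⟨smul_left_cancel _ hc, rfl, hl⟩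

/-- The coefficients `s` on the `K` phases from `x` on, followed by the coefficients `s'` on the next
`K` phases. -/
def join (x : ℤ) (K : ℕ) (s s' : ℤ → ZMod (m + 1)) (q : ℤ) : ZMod (m + 1) :=
  if q < x + K then s (q - x) else s' (q - x - K)

/-- The displacement of the second leg, if the first leg displaces by `tw u x c` and the total
displacement is to be `v`. It is expressed in the coordinates in which phase `x + K` is phase `0`. -/
def secondDisp (u : (ZMod (m + 1))ˣ) (K : ℕ) (x : ℤ) (v c : Fin d → ZMod (m + 1)) :
    Fin d → ZMod (m + 1) := tw u (-(x + K)) (v - tw u x c)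

lemma secondDisp_injective (u : (ZMod (m + 1))ˣ) (K : ℕ) (x : ℤ) (v : Fin d → ZMod (m + 1)) :
    Function.Injective (secondDisp u K x v) := by
  have htw : ∀ q, Function.Injective (tw u q : (Fin d → ZMod (m + 1)) → _) := fun q =>
    Function.LeftInverse.injective (g := tw u (-q)) fun c => by
      rw [tw_tw, neg_add_cancel, tw_zero]
  intro c c' hcc
  exact htw _ (sub_right_injective (htw _ hcc))

/-- The path from `(a, t)` to the timeline of `b` for the sample `ω = (c, l, l')`: its first leg has
displacement `tw u x c`, where `x` is the starting phase, and its second leg makes up for the rest;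
`l` and `l'` are the scaling factors of the two legs. -/
def vbsPath (u : (ZMod (m + 1))ˣ) (E : Fin N ≃ (Fin d → ZMod (m + 1)))
    (rep : (Fin d → ZMod (m + 1)) → ℤ → ZMod (m + 1)) (K : ℕ) (a b : Fin N) (t : ℤ)
    (ω : (Fin d → ZMod (m + 1)) × (ZMod (m + 1))ˣ × (ZMod (m + 1))ˣ) : ORNPath N :=
  coefPath (join (startPhase m t) K (coef rep ω.1 ω.2.1)
    (coef rep (secondDisp u K (startPhase m t) (E b - E a) ω.1) ω.2.2)) a t
    (m * (2 * K + 1) - 1)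

lemma join_support {K : ℕ} {x : ℤ} {s s' : ℤ → ZMod (m + 1)} (hs : ∀ i < 0, s i = 0)
    (hs' : ∀ i, (K : ℤ) ≤ i → s' i = 0) (q : ℤ) (hq : q < x ∨ x + (2 * K : ℕ) ≤ q) :
    join x K s s' q = 0 := by
  rw [join]
  push_cast at hq
  split_ifs with h
  · exact hs _ (by omega)
  · exact hs' _ (by omega)

/-- The two legs together lead from `a` to `b`. -/
lemma vbsPath_total (hm : 0 < m) {u : (ZMod (m + 1))ˣ} (E : Fin N ≃ (Fin d → ZMod (m + 1)))
    {rep : (Fin d → ZMod (m + 1)) → ℤ → ZMod (m + 1)} {K : ℕ}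
    (hrep : ∀ c, ∑ i ∈ Finset.range K, rep c i • dir u i = c)
    (hrep0 : ∀ c i, i < 0 ∨ (K : ℤ) ≤ i → rep c i = 0) (a b : Fin N) (t : ℤ)
    (ω : (Fin d → ZMod (m + 1)) × (ZMod (m + 1))ˣ × (ZMod (m + 1))ˣ) :
    E a + ∑ j ∈ Finset.range (m * (2 * K + 1) - 1),
      moved u (join (startPhase m t) K (coef rep ω.1 ω.2.1)
        (coef rep (secondDisp u K (startPhase m t) (E b - E a) ω.1) ω.2.2)) (t + j) = E b := by
  rw [sum_moved hm u _ t (2 * K) (join_support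
    (fun i hi => by rw [coef, hrep0 _ _ (Or.inl hi), mul_zero])
    (fun i hi => by rw [coef, hrep0 _ _ (Or.inr hi), mul_zero]))]
  set x := startPhase m t
  rw [two_mul, Finset.sum_range_add]
  have h1 : ∑ i ∈ Finset.range K, join x K (coef rep ω.1 ω.2.1)
      (coef rep (secondDisp u K x (E b - E a) ω.1) ω.2.2) (x + i) • dir u (x + i) =
      tw u x ω.1 := by
    conv_rhs => rw [← sum_coef hrep ω.1 ω.2.1, tw_sum]
    refine Finset.sum_congr rfl fun i hi => ?_
    rw [Finset.mem_range] at hi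
    rw [join, if_pos (by omega), dir_add, add_sub_cancel_left]
  have h2 : ∑ i ∈ Finset.range K, join x K (coef rep ω.1 ω.2.1)
      (coef rep (secondDisp u K x (E b - E a) ω.1) ω.2.2) (x + (K + i : ℕ)) •
        dir u (x + (K + i : ℕ)) = E b - E a - tw u x ω.1 := by
    have h3 : E b - E a - tw u x ω.1 = tw u (x + K) (secondDisp u K x (E b - E a) ω.1) := by
      rw [secondDisp, tw_tw, add_neg_cancel, tw_zero]
    rw [h3]
    conv_rhs => rw [← sum_coef hrep (secondDisp u K x (E b - E a) ω.1) ω.2.2, tw_sum]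
    refine Finset.sum_congr rfl fun i hi => ?_
    rw [join, if_neg (by push_cast; omega), ← dir_add]
    push_cast
    congr 2 <;> ring
  rw [h1, h2]
  abel

lemma vbsPath_periodic (hm : 0 < m) {u : (ZMod (m + 1))ˣ} (hu : u ^ m = 1)
    (E : Fin N ≃ (Fin d → ZMod (m + 1)))
    {rep : (Fin d → ZMod (m + 1)) → ℤ → ZMod (m + 1)} {K : ℕ} (a b : Fin N) (t : ℤ)
    (ω : (Fin d → ZMod (m + 1)) × (ZMod (m + 1))ˣ × (ZMod (m + 1))ˣ) :
    vbsPath u E rep K a b (t + (m * m : ℕ)) ω =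
      (vbsPath u E rep K a b t ω).shift (m * m : ℕ) := by
  have hx : startPhase m (t + (m * m : ℕ)) = startPhase m t + m := by
    rw [startPhase, startPhase]
    push_cast
    rw [show t + (m : ℤ) * m - 1 = t - 1 + m * m by ring, Int.add_mul_ediv_right _ _ (by omega)]
    ring
  have h2 : ∀ c, secondDisp u K (startPhase m t + m) (E b - E a) c =
      secondDisp u K (startPhase m t) (E b - E a) c := by
    intro c
    rw [secondDisp, secondDisp, tw_period hu, ← tw_period hu (-(startPhase m t + m + K))]
    congr 1
    ring
  simp only [vbsPath, coefPath, ORNPath.shift, hx, h2, ORNPath.mk.injEq, true_and]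
  refine List.map_congr_left fun k _ => ?_
  have h3 : (t + (m * m : ℕ) + k) / (m : ℤ) = (t + k) / m + m := by
    push_cast
    rw [show t + (m : ℤ) * m + k = t + k + m * m by ring, Int.add_mul_ediv_right _ _ (by omega)]
  have h4 : scal m (t + (m * m : ℕ) + k) = scal m (t + k) := by
    rw [scal, scal]
    push_cast
    rw [show t + (m : ℤ) * m + k = t + k + m * m by ring, Int.add_mul_emod_self_right]
  rw [h3, h4]
  congr 2
  rw [join, join]
  have e1 : ((t + k) / (m : ℤ) + m < startPhase m t + m + K) ↔
      ((t + k) / (m : ℤ) < startPhase m t + K) := by omega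
  simp only [e1]
  congr 2 <;> ring

/-- The design routing each message along `vbsPath` for a uniformly random sample. -/
noncomputable def vbsDesign (hm : 0 < m) {u : (ZMod (m + 1))ˣ} (hu : u ^ m = 1)
    (E : Fin N ≃ (Fin d → ZMod (m + 1)))
    {rep : (Fin d → ZMod (m + 1)) → ℤ → ZMod (m + 1)} {K : ℕ}
    (hrep : ∀ c, ∑ i ∈ Finset.range K, rep c i • dir u i = c)
    (hrep0 : ∀ c i, i < 0 ∨ (K : ℤ) ≤ i → rep c i = 0) : ORNDesign N (m * m) where
  sched := vbsSched hm u hu E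
  route a b t := sampleFlow (vbsPath u E rep K a b t)
  route_support a b t P hP := by
    obtain ⟨ω, -, hω⟩ := Finset.exists_ne_zero_of_sum_ne_zero hP
    obtain ⟨rfl⟩ : P = vbsPath u E rep K a b t ω := by
      by_contra hne
      exact hω (if_neg hne)
    refine ⟨rfl, ?_⟩
    rw [vbsPath, foldl_coefPath, vbsPath_total hm E hrep hrep0]
    simp
  route_unit a b t := by
    have h1 := tsum_sampleFlow (vbsPath u E rep K a b t) (fun _ => True)
    rw [← Equiv.tsum_eq (Equiv.subtypeUnivEquiv (p := fun _ : ORNPath N => True)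
      (fun _ => trivial))]
    refine h1.trans ?_
    rw [Finset.filter_true, Finset.card_univ]
    exact ENNReal.mul_inv_cancel (by exact_mod_cast Fintype.card_ne_zero)
      (ENNReal.natCast_ne_top _)
  route_periodic a b t P := by
    have hinj : ∀ P P' : ORNPath N, P.shift (m * m : ℕ) = P'.shift (m * m : ℕ) ↔ P = P' := by
      rintro ⟨⟨a, t⟩, l⟩ ⟨⟨a', t'⟩, l'⟩
      simp [ORNPath.shift]
    classical
    refine Finset.sum_congr rfl fun ω _ => if_congr ?_ rfl rfl
    rw [vbsPath_periodic hm hu E, hinj]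

end Design

/-! ### Load of an edge -/

section Load

variable {m d N : ℕ}

open Classical in
/-- The samples whose path crosses the edge `(y, τ)` do so on the first or on the second leg. In the
first case the sample determines the source `a = z₁ ω`, namely `y` minus the displacement so far. In
the second case, after the injective change of variables from the displacement of the first leg to that
of the second, the sample determines the destination `b = z₂ ω`, namely `y` plus the displacement still
to come. Both functions are independent of `a` and `b`. -/
lemma card_usesEdge_le (hm : 0 < m) {u : (ZMod (m + 1))ˣ} (hu : u ^ m = 1)
    [Fact (m + 1).Prime]
    (E : Fin N ≃ (Fin d → ZMod (m + 1)))
    {rep : (Fin d → ZMod (m + 1)) → ℤ → ZMod (m + 1)} {K : ℕ}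
    (hrep : ∀ c, ∑ i ∈ Finset.range K, rep c i • dir u i = c)
    (hrep0 : ∀ c i, i < 0 ∨ (K : ℤ) ≤ i → rep c i = 0) (y : Fin N) (τ t : ℤ) :
    ∃ z₁ z₂ : (Fin d → ZMod (m + 1)) × (ZMod (m + 1))ˣ × (ZMod (m + 1))ˣ → Fin N,
      ∀ a b : Fin N,
      (Finset.univ.filter fun ω =>
        (vbsPath u E rep K a b t ω).usesEdge (vbsSched hm u hu E) (y, τ)).card ≤
      (Finset.univ.filter fun ω => coef rep ω.1 ω.2.1 (τ / m - startPhase m t) = scal m τ ∧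
        a = z₁ ω).card +
      (Finset.univ.filter fun ω => coef rep ω.1 ω.2.1 (τ / m - startPhase m t - K) = scal m τ ∧
        b = z₂ ω).card := by
  set x := startPhase m t with hx
  let z₁ : (Fin d → ZMod (m + 1)) × (ZMod (m + 1))ˣ × (ZMod (m + 1))ˣ → Fin N := fun ω =>
    E.symm (E y - ∑ j ∈ Finset.range (τ - t).toNat,
      moved u (fun q => coef rep ω.1 ω.2.1 (q - x)) (t + j))
  let z₂ : (Fin d → ZMod (m + 1)) × (ZMod (m + 1))ˣ × (ZMod (m + 1))ˣ → Fin N := fun ω =>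
    E.symm (E y + ∑ j ∈ Finset.Ico (τ - t).toNat (m * (2 * K + 1) - 1),
      moved u (fun q => coef rep ω.1 ω.2.1 (q - x - K)) (t + j))
  refine ⟨z₁, z₂, fun a b => ?_⟩
  have hle : (Finset.univ.filter fun
      ω : (Fin d → ZMod (m + 1)) × (ZMod (m + 1))ˣ × (ZMod (m + 1))ˣ =>
      coef rep (secondDisp u K x (E b - E a) ω.1) ω.2.2 (τ / m - x - K) = scal m τ ∧
        b = z₂ (secondDisp u K x (E b - E a) ω.1, ω.2.2, ω.2.1)).card ≤
      (Finset.univ.filter fun ω => coef rep ω.1 ω.2.1 (τ / m - x - K) = scal m τ ∧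
        b = z₂ ω).card := by
    refine Finset.card_le_card_of_injOn
      (fun ω => (secondDisp u K x (E b - E a) ω.1, ω.2.2, ω.2.1)) ?_ ?_
    · intro ω hω
      exact Finset.mem_filter.2 ⟨Finset.mem_univ _, (Finset.mem_filter.1 hω).2⟩
    · rintro ⟨c, l, l'⟩ - ⟨c₂, l₂, l₂'⟩ - heq
      simp only [Prod.mk.injEq] at heq ⊢
      exact ⟨secondDisp_injective _ _ _ _ heq.1, heq.2.2, heq.2.1⟩
  refine le_trans ?_ (Nat.add_le_add_left hle _)
  refine le_trans (Finset.card_le_card ?_) (Finset.card_union_le _ _)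
  intro ω hω
  obtain ⟨k, hkL, hk, hbit, hnode⟩ :=
    usesEdge_coefPath hm u hu E _ a t _ y τ (Finset.mem_filter.1 hω).2
  have htot := vbsPath_total hm E hrep hrep0 a b t ω
  rw [← hx] at hbit hnode htot
  have hkn : (τ - t).toNat = k := by omega
  rw [Finset.mem_union, Finset.mem_filter, Finset.mem_filter]
  by_cases hq : τ / m < x + K
  · left
    refine ⟨Finset.mem_univ _, by simpa [join, hq] using hbit, ?_⟩
    rw [Equiv.eq_symm_apply, hkn, hnode, eq_sub_iff_add_eq]
    congr 1
    refine Finset.sum_congr rfl fun j hj => ?_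
    rw [Finset.mem_range] at hj
    have hjq : (t + j) / (m : ℤ) < x + K :=
      lt_of_le_of_lt (Int.ediv_le_ediv (by omega) (by omega)) hq
    rw [moved, moved, join, if_pos hjq]
  · right
    refine ⟨Finset.mem_univ _, by simpa [join, hq] using hbit, ?_⟩
    rw [Equiv.eq_symm_apply, hkn, hnode]
    refine htot.symm.trans ?_
    rw [← Finset.sum_range_add_sum_Ico _ hkL.le, ← add_assoc]
    congr 1
    refine Finset.sum_congr rfl fun j hj => ?_
    rw [Finset.mem_Ico] at hj
    have hjq : ¬ (t + j) / (m : ℤ) < x + K := by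
      have := Int.ediv_le_ediv (c := (m : ℤ)) (by omega) (show τ ≤ t + j by omega)
      omega
    rw [moved, moved, join, if_neg hjq]

open Classical in
/-- Load caused by the demand `D` of one timeslot `t`, before division by the number of samples: for
each of the two legs, at most `R` per sample whose coefficient in the phase of the edge is the scalar
of the edge, and `card_coef_le` bounds the number of these samples. -/
lemma slot_load_le (hm : 0 < m) {u : (ZMod (m + 1))ˣ} (hu : u ^ m = 1)
    [Fact (m + 1).Prime]
    (E : Fin N ≃ (Fin d → ZMod (m + 1)))
    {rep : (Fin d → ZMod (m + 1)) → ℤ → ZMod (m + 1)} {K : ℕ}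
    (hrep : ∀ c, ∑ i ∈ Finset.range K, rep c i • dir u i = c)
    (hrep0 : ∀ c i, i < 0 ∨ (K : ℤ) ≤ i → rep c i = 0) (y : Fin N) (τ t : ℤ)
    (D : Fin N → Fin N → ℝ≥0∞) (R : ℝ≥0∞) (hrow : ∀ a, ∑ b, D a b ≤ R)
    (hcol : ∀ b, ∑ a, D a b ≤ R) :
    ∑ a, ∑ b, D a b * ((Finset.univ.filter fun ω =>
        (vbsPath u E rep K a b t ω).usesEdge (vbsSched hm u hu E) (y, τ)).card : ℝ≥0∞) ≤
      R * (m * ((Finset.univ.filter fun c =>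
        rep c (τ / m - startPhase m t) ≠ 0).card : ℝ≥0∞)) +
      R * (m * ((Finset.univ.filter fun c =>
        rep c (τ / m - startPhase m t - K) ≠ 0).card : ℝ≥0∞)) := by
  obtain ⟨z₁, z₂, hz⟩ := card_usesEdge_le hm hu E hrep hrep0 y τ t
  have hcoef : ∀ i, ((Finset.univ.filter fun
      ω : (Fin d → ZMod (m + 1)) × (ZMod (m + 1))ˣ × (ZMod (m + 1))ˣ =>
      coef rep ω.1 ω.2.1 i = scal m τ).card : ℝ≥0∞) ≤
      m * ((Finset.univ.filter fun c => rep c i ≠ 0).card : ℝ≥0∞) := fun i => by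
    rw [← Nat.cast_mul]
    exact Nat.cast_le.2 (card_coef_le rep i (scal_ne_zero hm τ))
  generalize τ / m - startPhase m t = i at *
  have h1 := load_le D R hrow
    (fun ω : (Fin d → ZMod (m + 1)) × (ZMod (m + 1))ˣ × (ZMod (m + 1))ˣ =>
      coef rep ω.1 ω.2.1 i = scal m τ) z₁
  have h2 := load_le (fun b a => D a b) R hcol
    (fun ω : (Fin d → ZMod (m + 1)) × (ZMod (m + 1))ˣ × (ZMod (m + 1))ˣ =>
      coef rep ω.1 ω.2.1 (i - K) = scal m τ) z₂
  rw [Finset.sum_comm] at h2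
  refine le_trans (le_trans ?_ (add_le_add h1 h2)) (add_le_add (mul_le_mul' le_rfl ?_)
    (mul_le_mul' le_rfl ?_))
  -- the two sides differ only in the decidability instances of the filters
  rotate_left
  · exact le_trans (le_of_eq (by congr!)) (hcoef i)
  · exact le_trans (le_of_eq (by congr!)) (hcoef (i - K))
  rw [← Finset.sum_add_distrib]
  refine Finset.sum_le_sum fun a _ => ?_
  rw [← Finset.sum_add_distrib]
  refine Finset.sum_le_sum fun b _ => ?_
  rw [← mul_add, ← Nat.cast_add]
  refine mul_le_mul' le_rfl (Nat.cast_le.2 ?_)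
  convert hz a b

open Classical in
/-- The load of an edge is the demand-weighted number of samples whose path crosses it, divided by the
number `(m + 1) ^ d * m ^ 2` of samples. -/
lemma edgeFlow_vbsDesign (hm : 0 < m) {u : (ZMod (m + 1))ˣ} (hu : u ^ m = 1)
    [Fact (m + 1).Prime]
    (E : Fin N ≃ (Fin d → ZMod (m + 1)))
    {rep : (Fin d → ZMod (m + 1)) → ℤ → ZMod (m + 1)} {K : ℕ}
    (hrep : ∀ c, ∑ i ∈ Finset.range K, rep c i • dir u i = c)
    (hrep0 : ∀ c i, i < 0 ∨ (K : ℤ) ≤ i → rep c i = 0) (e : Fin N × ℤ)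
    (D : ℤ → Fin N → Fin N → ℝ) :
    edgeFlow (vbsDesign hm hu E hrep hrep0).sched
      (inducedFlow (vbsDesign hm hu E hrep hrep0) D) e =
    (∑' t : ℤ, ∑ a, ∑ b, ENNReal.ofReal (D t a b) * ((Finset.univ.filter fun ω =>
        (vbsPath u E rep K a b t ω).usesEdge (vbsSched hm u hu E) e).card : ℝ≥0∞)) *
      ((m + 1 : ℝ≥0∞) ^ d * (m * m))⁻¹ := by
  have hcard : (Fintype.card
      ((Fin d → ZMod (m + 1)) × (ZMod (m + 1))ˣ × (ZMod (m + 1))ˣ) : ℝ≥0∞) =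
      (m + 1 : ℝ≥0∞) ^ d * (m * m) := by
    have h1 : Fintype.card (ZMod (m + 1))ˣ = m := by
      rw [ZMod.card_units_eq_totient, Nat.totient_prime Fact.out]; rfl
    rw [Fintype.card_prod, Fintype.card_prod, h1, Fintype.card_fun, Fintype.card_fin, ZMod.card]
    push_cast
    rfl
  have hx : ∀ X : Fin N × Fin N × ℤ, ENNReal.ofReal (D X.2.2 X.1 X.2.1) *
      ∑' P : {P : ORNPath N // P.usesEdge (vbsDesign hm hu E hrep hrep0).sched e},
        (vbsDesign hm hu E hrep hrep0).route X.1 X.2.1 X.2.2 P.val =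
      ENNReal.ofReal (D X.2.2 X.1 X.2.1) * ((Finset.univ.filter fun ω =>
        (vbsPath u E rep K X.1 X.2.1 X.2.2 ω).usesEdge (vbsSched hm u hu E) e).card : ℝ≥0∞) *
      ((m + 1 : ℝ≥0∞) ^ d * (m * m))⁻¹ := by
    intro X
    rw [mul_assoc, ← hcard]
    congr 1
    exact tsum_sampleFlow (vbsPath u E rep K X.1 X.2.1 X.2.2)
      (fun P => P.usesEdge (vbsSched hm u hu E) e)
  simp only [edgeFlow, inducedFlow]
  rw [ENNReal.tsum_comm]
  simp_rw [ENNReal.tsum_mul_left]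
  rw [tsum_congr hx, ENNReal.tsum_mul_right]
  congr 1
  rw [ENNReal.tsum_prod', tsum_fintype, Summable.tsum_finsetSum fun _ _ => ENNReal.summable]
  refine Finset.sum_congr rfl fun a _ => ?_
  rw [ENNReal.tsum_prod', tsum_fintype, Summable.tsum_finsetSum fun _ _ => ENNReal.summable]

open Classical in
/-- Let `W` be the total number of nonzero coefficients of the representations `rep c` over all `c`,
and `N = (m + 1) ^ d`. A demand of throughput `r` loads every edge by at most `2 r W / N`: each message
pays `W / N` hops on average for each of its two legs, and the load is spread evenly over the edges. -/
lemma vbsDesign_throughput (hm : 0 < m) {u : (ZMod (m + 1))ˣ} (hu : u ^ m = 1)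
    [Fact (m + 1).Prime]
    (E : Fin N ≃ (Fin d → ZMod (m + 1)))
    {rep : (Fin d → ZMod (m + 1)) → ℤ → ZMod (m + 1)} {K : ℕ}
    (hrep : ∀ c, ∑ i ∈ Finset.range K, rep c i • dir u i = c)
    (hrep0 : ∀ c i, i < 0 ∨ (K : ℤ) ≤ i → rep c i = 0) (W : ℕ)
    (hW : ∑' i : ℤ, ((Finset.univ.filter fun c => rep c i ≠ 0).card : ℝ≥0∞) = W)
    (r : ℝ) (hr : 0 ≤ r) (hrW : 2 * r * W ≤ (m + 1 : ℝ) ^ d) :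
    GuaranteesThroughput (vbsDesign hm hu E hrep hrep0) r := by
  rintro D ⟨hpos, hrow, hcol⟩ ⟨y, τ⟩
  have hcast : ∀ f : Fin N → ℝ, (∀ i, 0 ≤ f i) → ∑ i, f i ≤ r →
      ∑ i, ENNReal.ofReal (f i) ≤ ENNReal.ofReal r := by
    intro f hf hs
    rw [← ENNReal.ofReal_sum_of_nonneg fun i _ => hf i]
    exact ENNReal.ofReal_le_ofReal hs
  have hslot := fun t => slot_load_le hm hu E hrep hrep0 y τ t
    (fun a b => ENNReal.ofReal (D t a b)) (ENNReal.ofReal r)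
    (fun a => hcast _ (hpos t a) (hrow t a)) (fun b => hcast _ (fun a => hpos t a b) (hcol t b))
  have hsum := ENNReal.tsum_le_tsum hslot
  have hshift : ∀ (w : ℤ → ℝ≥0∞) (k : ℤ), ∑' t : ℤ, w (τ / m - startPhase m t - k) =
      m * ∑' i, w i := by
    intro w k
    rw [tsum_startPhase hm fun x => w (τ / m - x - k)]
    congr 1
    rw [← (Equiv.subLeft (τ / m - k)).tsum_eq w]
    refine tsum_congr fun x => ?_
    rw [Equiv.subLeft_apply]
    congr 1
    ring
  have hw := hshift fun i => ((Finset.univ.filter fun c => rep c i ≠ 0).card : ℝ≥0∞)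
  simp only [hW] at hw
  have hw0 := hw 0
  simp only [sub_zero] at hw0
  rw [ENNReal.tsum_add, ENNReal.tsum_mul_left, ENNReal.tsum_mul_left,
    ENNReal.tsum_mul_left, ENNReal.tsum_mul_left, hw0, hw K] at hsum
  have hfinal : 2 * ENNReal.ofReal r * W ≤ (m + 1 : ℝ≥0∞) ^ d := by
    have h1 := ENNReal.ofReal_le_ofReal hrW
    rw [ENNReal.ofReal_mul (by positivity), ENNReal.ofReal_mul (by positivity),
      ENNReal.ofReal_natCast, ENNReal.ofReal_pow (by positivity),
      ENNReal.ofReal_add (by positivity) zero_le_one] at h1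
    simpa using h1
  rw [edgeFlow_vbsDesign, ← div_eq_mul_inv]
  refine ENNReal.div_le_of_le_mul ?_
  rw [one_mul]
  refine hsum.trans ?_
  calc _ = 2 * ENNReal.ofReal r * W * (m * m) := by ring
    _ ≤ _ := by gcongr

end Load

/-! ### The design with the required parameters -/

/-- **VBS.** Let `h ≥ 1`, let `0 < δ ≤ 1/(4(h+1)(1+1/(2h))²)`, and set
`ε = δ/4`. Let `n` be prime, `N = n^{h+1}`, `Q₀` the least integer with
`binom(Q₀,h) ≥ δn`, and `Q = max(2h²−h, Q₀)`; assume `n > h + 1 + Q`. Then there exists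
an ORN design on `N` nodes that guarantees throughput `1/(2(h+1−ε))` and has maximum
latency at most `(n−1)(3+2h+2Q) − 1`. -/
theorem vbs_exists (h : ℕ) (hh : 1 ≤ h) (δ ε : ℝ) (hδ0 : 0 < δ)
    (hδ1 : δ ≤ 1 / (4 * ((h : ℝ) + 1) * (1 + 1 / (2 * h)) ^ 2))
    (hε : ε = δ / 4)
    (n : ℕ) (hn : n.Prime)
    (Q₀ Q : ℕ) (hQ₀ : IsLeast {q : ℕ | δ * n ≤ (q.choose h : ℝ)} Q₀)
    (hQ : Q = max (2 * h ^ 2 - h) Q₀)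
    (hnQ : h + 1 + Q < n) :
    ∃ (T : ℕ) (R : ORNDesign (n ^ (h + 1)) T),
      GuaranteesThroughput R (1 / (2 * ((h : ℝ) + 1 - ε))) ∧
      MaxLatencyLE R ((n - 1) * (3 + 2 * h + 2 * Q) - 1) := by
  obtain ⟨m, rfl⟩ : ∃ m, n = m + 1 := ⟨n - 1, by omega⟩
  have : Fact (m + 1).Prime := ⟨hn⟩
  have hm : 0 < m := by omega
  set K := h + 1 + Q with hKdef
  have hKm : K ≤ m := by omega
  obtain ⟨u, hu⟩ := IsCyclic.exists_generator (α := (ZMod (m + 1))ˣ)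
  have hord : orderOf u = m := by
    rw [orderOf_eq_card_of_forall_mem_zpowers hu, Nat.card_eq_fintype_card,
      ZMod.card_units_eq_totient, Nat.totient_prime hn]; rfl
  have hum : u ^ m = 1 := by
    have h1 := pow_orderOf_eq_one u
    rwa [hord] at h1
  let x : Fin K → ZMod (m + 1) := fun i => ((u ^ (i : ℕ) : (ZMod (m + 1))ˣ) : ZMod (m + 1))
  have hx : Function.Injective x := by
    intro i j hij
    have h1 : u ^ (i : ℕ) = u ^ (j : ℕ) := Units.ext hij
    exact Fin.ext (pow_injOn_Iio_orderOf (by rw [hord]; exact lt_of_lt_of_le i.2 hKm)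
      (by rw [hord]; exact lt_of_lt_of_le j.2 hKm) h1)
  have hh' : (1 : ℝ) ≤ h := by exact_mod_cast hh
  have hδ1' : δ ≤ 1 := by
    refine hδ1.trans ?_
    rw [div_le_one (by positivity)]
    have h1 : (1 : ℝ) ≤ (1 + 1 / (2 * h)) ^ 2 := one_le_pow₀ (by
      have : (0 : ℝ) ≤ 1 / (2 * h) := by positivity
      linarith)
    nlinarith
  have hC : δ * Fintype.card (ZMod (m + 1)) ≤ K.choose h := by
    rw [ZMod.card]
    refine le_trans hQ₀.1 ?_
    exact_mod_cast Nat.choose_le_choose h (show Q₀ ≤ K by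
      have := le_max_right (2 * h ^ 2 - h) Q₀
      omega)
  classical
  obtain ⟨rep₀, hrep₀, hW₀⟩ := exists_rep hh hx (by omega) hδ0 hδ1' hC
  -- `rep₀` extended by zero to all phases
  let rep : (Fin (h + 1) → ZMod (m + 1)) → ℤ → ZMod (m + 1) := fun c i =>
    if hi : i.toNat < K ∧ 0 ≤ i then rep₀ c ⟨i.toNat, hi.1⟩ else 0
  have hrepFin : ∀ c (i : Fin K), rep c ((i : ℕ) : ℤ) = rep₀ c i := by
    intro c i
    have hi : (((i : ℕ) : ℤ)).toNat < K ∧ 0 ≤ ((i : ℕ) : ℤ) := ⟨by simp, by omega⟩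
    simp only [rep, dif_pos hi]
    rfl
  have hdir : ∀ i : Fin K, (dir u ((i : ℕ) : ℤ) : Fin (h + 1) → ZMod (m + 1)) = vand h x i := by
    intro i
    funext j
    simp only [dir, tw, vand, x, Pi.one_apply, mul_one]
    rw [zpow_mul, zpow_natCast, zpow_natCast]
    simp
  have hrep : ∀ c, ∑ i ∈ Finset.range K, rep c i • dir u i = c := by
    intro c
    rw [Finset.sum_range]
    conv_rhs => rw [← hrep₀ c]
    refine Finset.sum_congr rfl fun i _ => ?_
    rw [hrepFin, hdir]
  have hrep0 : ∀ c i, i < 0 ∨ (K : ℤ) ≤ i → rep c i = 0 := by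
    intro c i hi
    exact dif_neg (by omega)
  have hN : Fintype.card (Fin (h + 1) → ZMod (m + 1)) = (m + 1) ^ (h + 1) := by simp
  let E : Fin ((m + 1) ^ (h + 1)) ≃ (Fin (h + 1) → ZMod (m + 1)) :=
    (Fintype.equivFinOfCardEq hN).symm
  have hW : ∑' i : ℤ, ((Finset.univ.filter fun c => rep c i ≠ 0).card : ℝ≥0∞) =
      ((∑ c, (Finset.univ.filter fun i => rep₀ c i ≠ 0).card : ℕ) : ℝ≥0∞) := by
    have hinj : Function.Injective (fun i : Fin K => ((i : ℕ) : ℤ)) := fun i j hij =>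
      Fin.ext (Int.ofNat_inj.1 hij)
    rw [← hinj.tsum_eq, tsum_fintype]
    · simp_rw [hrepFin, Finset.card_filter]
      rw [Finset.sum_comm]
      push_cast
      rfl
    · intro i hi
      by_contra hni
      apply hi
      have : ∀ c, rep c i = 0 := fun c => hrep0 c i (by
        by_contra! hc
        exact hni ⟨⟨i.toNat, by omega⟩, by simp; omega⟩)
      simp [this]
  refine ⟨m * m, vbsDesign hm hum E hrep hrep0, ?_, ?_⟩
  · have hpos : 0 < (h : ℝ) + 1 - ε := by linarith
    refine vbsDesign_throughput hm hum E hrep hrep0 _ hW _ (by positivity) ?_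
    rw [ZMod.card, ← hε] at hW₀
    push_cast at hW₀ ⊢
    rw [show ∀ W : ℝ, 2 * (1 / (2 * ((h : ℝ) + 1 - ε))) * W = W / ((h : ℝ) + 1 - ε) from
      fun W => by field_simp, div_le_iff₀ hpos]
    refine le_trans (le_of_eq ?_) hW₀
    congr!
  · intro a b t P hP
    obtain ⟨ω, -, hω⟩ := Finset.exists_ne_zero_of_sum_ne_zero hP
    obtain ⟨rfl⟩ : P = vbsPath u E rep K a b t ω := by
      by_contra hne
      exact hω (if_neg hne)
    simp only [ORNPath.latency, vbsPath, coefPath, List.length_map, List.length_range]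
    rw [Nat.add_sub_cancel, show 3 + 2 * h + 2 * Q = 2 * K + 1 by omega]
end
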